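/- arXiv:2002.02727 — 4 statements merged into one kernel-verified Lean document; each statement's English description precedes it below -/
import Mathlib

section
/- Let A and B be Noetherian local commutative rings containing a field k. If the completed tensor product A⊗̂_k B is a Noetherian ring, then A⊗̂_k B is flat as an A-module and flat as a B-module. -/
open TensorProduct

/-- The ideal `r = m ⊗ B + A ⊗ n` of `C = A ⊗[k] B`, where `m` and `n` are the Jacobson
radicals of `A` and `B` (for a local ring, the Jacobson radical is the maximal ideal). -/
noncomputable def tensorRadical (k A B : Type*) [Field k] [CommRing A] [CommRing B]
    [Algebra k A] [Algebra k B] : Ideal (A ⊗[k] B) :=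
  Ideal.map (Algebra.TensorProduct.includeLeft (R := k) (S := k) (A := A) (B := B))
      ((⊥ : Ideal A).jacobson) ⊔
    Ideal.map (Algebra.TensorProduct.includeRight (R := k) (A := A) (B := B))
      ((⊥ : Ideal B).jacobson)

/-- The completed tensor product `A ⊗̂[k] B`: the `r`-adic separated completion of
`C = A ⊗[k] B`, i.e. the inverse limit of the rings `C ⧸ r ^ i`. -/
noncomputable abbrev CompletedTensor (k A B : Type*) [Field k] [CommRing A] [CommRing B]
    [Algebra k A] [Algebra k B] : Type _ :=
  AdicCompletion (tensorRadical k A B) (A ⊗[k] B)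

/-!
The canonical map from `E ⊗[A] M`, where `E` is the `r`-adic completion of `C`, to the completion
of `C ⊗[A] M` is surjective for finite `M` and bijective for finite free `M`, so flatness of `E`
over a Noetherian ring `A` follows once completion preserves the exactness of `C ⊗ K → C ⊗ Aⁿ → C`.
It does as soon as both maps satisfy the conclusion of the Artin–Rees lemma for `r`. This cannot be
quoted from the Noetherian theory, because `C = A ⊗[k] B` need not be Noetherian; it is transported
from `A` instead. Writing `r = mC + F`, a large power of `r` lies in `m ^ j C + F ^ i`, and since
`C ⧸ F ^ i` is flat over `A`, the Artin–Rees lemma for `m` over `A` survives tensoring with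
`C ⧸ F ^ i`. For `F = nC` one has `C ⧸ F ^ i = A ⊗[k] (B ⧸ n ^ i)`, which is flat over `A` because
`k` is a field.
-/

section AdicStrict

open Filter AdicCompletion

variable {R M N P : Type*} [CommRing R] [AddCommGroup M] [Module R M] [AddCommGroup N] [Module R N]
  [AddCommGroup P] [Module R P]

/-- Strictness of `f` for the `I`-adic topologies: on the range of `f`, the quotient topology from
`M` and the subspace topology from `N` agree. Only the nontrivial comparison is recorded. -/
def IsAdicStrict (I : Ideal R) (f : M →ₗ[R] N) : Prop :=
  ∀ i : ℕ, ∀ᶠ j in atTop,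
    LinearMap.range f ⊓ I ^ j • (⊤ : Submodule R N) ≤ (I ^ i • (⊤ : Submodule R M)).map f

variable {I : Ideal R} {f : M →ₗ[R] N} {g : N →ₗ[R] P}

lemma adicCompletion_eval_eq_of_le {x y : AdicCompletion I M} {m n : ℕ} (hmn : m ≤ n)
    (h : eval I M n x = eval I M n y) : eval I M m x = eval I M m y := by
  rw [← transitionMap_comp_eval I M hmn, LinearMap.comp_apply, LinearMap.comp_apply, h]

lemma IsAdicStrict.exists_eval_eq_of_map_eq_zero (hg : IsAdicStrict I g) (hfg : Function.Exact f g)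
    {y : AdicCompletion I N} (hy : AdicCompletion.map I g y = 0) (n : ℕ) :
    ∃ x : M, eval I N n y = eval I N n (of I N (f x)) := by
  obtain ⟨j, hgj, hnj⟩ := ((hg n).and (eventually_ge_atTop n)).exists
  obtain ⟨b, hb⟩ := Submodule.Quotient.mk_surjective _ (eval I N j y)
  have hgb : g b ∈ I ^ j • (⊤ : Submodule R P) := by
    rw [← Submodule.Quotient.mk_eq_zero, ← LinearMap.reduceModIdeal_apply, hb]
    exact congrArg (eval I P j) hy
  obtain ⟨d, hd, hgd⟩ := hgj ⟨⟨b, rfl⟩, hgb⟩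
  obtain ⟨x, hx⟩ := (hfg (b - d)).1 (by rw [map_sub, hgd, sub_self])
  refine ⟨x, (adicCompletion_eval_eq_of_le (y := of I N b) hnj (by rw [← hb]; rfl)).trans ?_⟩
  rw [hx, eval_of, eval_of, Submodule.mkQ_apply, Submodule.mkQ_apply, Submodule.Quotient.eq,
    sub_sub_cancel]
  exact hd

lemma IsAdicStrict.mem_range_adicCompletion_map (hf : IsAdicStrict I f) {y : AdicCompletion I N}
    (hy : ∀ n, ∃ x : M, eval I N n y = eval I N n (of I N (f x))) :
    y ∈ Set.range (AdicCompletion.map I f) := by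
  choose x hx using hy
  obtain ⟨φ, hφ, hfφ⟩ := extraction_forall_of_eventually hf
  have hcauchy (n : ℕ) : f.rangeRestrict (x (φ n)) ≡ f.rangeRestrict (x (φ (n + 1)))
      [SMOD (I ^ n • ⊤ : Submodule R (LinearMap.range f))] := by
    have hmem : f (x (φ n) - x (φ (n + 1))) ∈ I ^ φ n • (⊤ : Submodule R N) := by
      rw [map_sub, ← Submodule.Quotient.eq]
      have hx' := adicCompletion_eval_eq_of_le (hφ n.lt_succ_self).le (hx (φ (n + 1)))
      exact (hx (φ n)).symm.trans hx'
    obtain ⟨d, hd, hfd⟩ := hfφ n ⟨⟨_, rfl⟩, hmem⟩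
    have hfd' : f.rangeRestrict d = f.rangeRestrict (x (φ n) - x (φ (n + 1))) := Subtype.ext hfd
    rw [SModEq.sub_mem, ← map_sub, ← hfd']
    exact Submodule.smul_top_le_comap_smul_top _ _ hd
  -- The approximations converge in the completion of `range f`, onto which the completion of `M`
  -- surjects.
  let z := AdicCompletion.mk I (LinearMap.range f) (.mk I _ _ hcauchy)
  obtain ⟨w, hw⟩ := AdicCompletion.map_surjective I f.surjective_rangeRestrict z
  have hz : AdicCompletion.map I (LinearMap.range f).subtype z = y :=
    AdicCompletion.ext fun n ↦ (adicCompletion_eval_eq_of_le hφ.le_apply (hx (φ n))).symm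
  refine ⟨w, ?_⟩
  rw [← hz, ← hw, map_comp_apply, LinearMap.subtype_comp_codRestrict]

lemma IsAdicStrict.exact_adicCompletion_map (hf : IsAdicStrict I f) (hg : IsAdicStrict I g)
    (hfg : Function.Exact f g) :
    Function.Exact (AdicCompletion.map I f) (AdicCompletion.map I g) := by
  refine fun y ↦ ⟨fun hy ↦ hf.mem_range_adicCompletion_map fun n ↦
    hg.exists_eval_eq_of_map_eq_zero hfg hy n, ?_⟩
  rintro ⟨x, rfl⟩
  rw [map_comp_apply, hfg.linearMap_comp_eq_zero, AdicCompletion.map_zero, LinearMap.zero_apply]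

end AdicStrict

section ArtinRees

open Filter

variable {A C M N : Type*} [CommRing A] [CommRing C] [Algebra A C] [AddCommGroup M] [Module A M]
  [AddCommGroup N] [Module A N]

lemma exists_comap_pow_smul_top_le [IsNoetherianRing A] [Module.Finite A N] (m : Ideal A)
    (f : M →ₗ[A] N) (i : ℕ) :
    ∃ j, (m ^ j • (⊤ : Submodule A N)).comap f ≤
      m ^ i • (⊤ : Submodule A M) ⊔ LinearMap.ker f := by
  obtain ⟨s, hs⟩ := Ideal.exists_pow_inf_eq_pow_smul m (LinearMap.range f)
  refine ⟨i + s, fun x hx ↦ ?_⟩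
  rw [← Submodule.comap_map_eq, Submodule.map_smul'', Submodule.map_top]
  have hfx := (hs (i + s) (Nat.le_add_left s i)).le ⟨hx, x, rfl⟩
  rw [Nat.add_sub_cancel] at hfx
  exact Submodule.smul_mono le_rfl inf_le_right hfx

lemma map_annihilator_sup_le_annihilator_tensorProduct (U V : Type*) [AddCommGroup U] [Module A U]
    [Module C U] [IsScalarTower A C U] [AddCommGroup V] [Module A V] :
    (Module.annihilator A V).map (algebraMap A C) ⊔ Module.annihilator C U ≤
      Module.annihilator C (U ⊗[A] V) := by
  refine sup_le (Ideal.map_le_iff_le_comap.2 fun a ha ↦ ?_) fun c hc ↦ ?_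
  · refine Module.mem_annihilator.2 fun t ↦ ?_
    rw [algebraMap_smul]
    have hat : LinearMap.lsmul A (U ⊗[A] V) a = 0 := TensorProduct.ext' fun u v ↦ by
      simp [← TensorProduct.tmul_smul, Module.mem_annihilator.1 ha]
    exact congr($hat t)
  · refine Module.mem_annihilator.2 fun t ↦ ?_
    have hct : LinearMap.lsmul C (U ⊗[A] V) c = 0 := AlgebraTensorModule.ext fun u v ↦ by
      simp [TensorProduct.smul_tmul', Module.mem_annihilator.1 hc]
    exact congr($hct t)

lemma le_annihilator_quotient_smul_top (a : Ideal A) :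
    a ≤ Module.annihilator A (N ⧸ a • (⊤ : Submodule A N)) := by
  rw [Submodule.annihilator_quotient]
  exact fun x hx ↦ Submodule.mem_colon.2 fun y _ ↦ Submodule.smul_mem_smul hx trivial

lemma smul_top_le_ker_map_mkQ_mkQ (a : Ideal A) (F : Ideal C) :
    (a.map (algebraMap A C) ⊔ F) • (⊤ : Submodule C (C ⊗[A] N)) ≤
      LinearMap.ker (AlgebraTensorModule.map F.mkQ (a • (⊤ : Submodule A N)).mkQ) := by
  refine Submodule.smul_le.2 fun c hc x _ ↦ ?_
  rw [LinearMap.mem_ker, map_smul]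
  refine Module.mem_annihilator.1 (map_annihilator_sup_le_annihilator_tensorProduct _ _ ?_) _
  rw [Ideal.annihilator_quotient]
  have ha := Ideal.map_mono (f := algebraMap A C) (le_annihilator_quotient_smul_top (N := N) a)
  exact sup_le_sup_right ha F hc

lemma ker_map_mkQ_mkQ_le (F : Ideal C) (L : Submodule A M) :
    LinearMap.ker (AlgebraTensorModule.map F.mkQ L.mkQ) ≤
      L.baseChange C ⊔ F • (⊤ : Submodule C (C ⊗[A] M)) := by
  have hF : Function.Exact (F.subtype.restrictScalars A) (F.mkQ.restrictScalars A) :=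
    LinearMap.exact_subtype_mkQ F
  intro x hx
  obtain ⟨_, ⟨y, rfl⟩, _, ⟨z, rfl⟩, rfl⟩ := Submodule.mem_sup.1 <| (TensorProduct.map_ker hF
    F.mkQ_surjective (LinearMap.exact_subtype_mkQ L) L.mkQ_surjective).le hx
  refine Submodule.add_mem_sup ⟨y, rfl⟩ ?_
  clear hx
  induction z with
  | zero => rw [map_zero]; exact zero_mem _
  | add z w hz hw => rw [map_add]; exact add_mem hz hw
  | tmul c u =>
    rw [LinearMap.rTensor_tmul, LinearMap.restrictScalars_apply, Submodule.subtype_apply,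
      ← mul_one (c : C), ← smul_eq_mul, ← TensorProduct.smul_tmul']
    exact Submodule.smul_mem_smul c.2 trivial

lemma baseChange_smul_top_sup_ker_le (b : Ideal A) (f : M →ₗ[A] N) :
    (b • (⊤ : Submodule A M) ⊔ LinearMap.ker f).baseChange C ≤
      b.map (algebraMap A C) • ⊤ ⊔ LinearMap.ker (f.baseChange C) := by
  rw [Submodule.baseChange_eq_span, Submodule.span_le]
  rintro _ ⟨_, hw, rfl⟩
  obtain ⟨u, hu, v, hv, rfl⟩ := Submodule.mem_sup.1 hw
  rw [map_add]
  refine Submodule.add_mem_sup ?_ (by simp [LinearMap.mem_ker.1 hv])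
  refine Submodule.smul_induction_on hu (fun a ha y _ ↦ ?_) fun y z hy hz ↦ ?_
  · rw [map_smul, ← algebraMap_smul C a]
    exact Submodule.smul_mem_smul (Ideal.mem_map_of_mem _ ha) Submodule.mem_top
  · rw [map_add]
    exact add_mem hy hz

lemma comap_baseChange_smul_top_le (a : Ideal A) (F : Ideal C) [Module.Flat A (C ⧸ F)]
    (f : M →ₗ[A] N) :
    ((a.map (algebraMap A C) ⊔ F) • (⊤ : Submodule C (C ⊗[A] N))).comap (f.baseChange C) ≤
      ((a • (⊤ : Submodule A N)).comap f).baseChange C ⊔ F • (⊤ : Submodule C (C ⊗[A] M)) := by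
  set L := (a • (⊤ : Submodule A N)).comap f
  let fbar : M ⧸ L →ₗ[A] N ⧸ a • (⊤ : Submodule A N) := L.mapQ _ f le_rfl
  have hinj : Function.Injective (fbar.lTensor (C ⧸ F)) := by
    refine Module.Flat.lTensor_preserves_injective_linearMap fbar (LinearMap.ker_eq_bot.1 ?_)
    rw [Submodule.ker_mapQ, Submodule.mkQ_map_self]
  refine fun x hx ↦ ker_map_mkQ_mkQ_le F L (hinj ?_)
  have hmap : fbar.lTensor (C ⧸ F) ∘ₗ TensorProduct.map (F.mkQ.restrictScalars A) L.mkQ =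
      TensorProduct.map (F.mkQ.restrictScalars A) (a • ⊤ : Submodule A N).mkQ ∘ₗ f.lTensor C :=
    TensorProduct.ext' fun _ _ ↦ rfl
  exact congr($hmap x).trans ((smul_top_le_ker_map_mkQ_mkQ a F hx).trans (map_zero _).symm)

lemma isAdicStrict_baseChange [IsNoetherianRing A] [Module.Finite A N] (m : Ideal A) (F : Ideal C)
    (hF : ∀ i, Module.Flat A (C ⧸ F ^ i)) (f : M →ₗ[A] N) :
    IsAdicStrict (m.map (algebraMap A C) ⊔ F) (f.baseChange C) := by
  intro i
  obtain ⟨j, hj⟩ := exists_comap_pow_smul_top_le m f i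
  filter_upwards [eventually_ge_atTop (j + i)] with n hn
  rintro _ ⟨⟨x, rfl⟩, hx⟩
  have hpow : (m.map (algebraMap A C) ⊔ F) ^ n ≤ (m ^ j).map (algebraMap A C) ⊔ F ^ i := by
    rw [Ideal.map_pow]
    exact (Ideal.pow_le_pow_right hn).trans Ideal.sup_pow_add_le_pow_sup_pow
  have hm : (m ^ i).map (algebraMap A C) ≤ (m.map (algebraMap A C) ⊔ F) ^ i :=
    Ideal.map_pow (algebraMap A C) m i ▸ Ideal.pow_right_mono le_sup_left i
  have hx' := comap_baseChange_smul_top_le (m ^ j) (F ^ i) f (Submodule.smul_mono_left hpow hx)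
  rw [← Submodule.mem_comap, Submodule.comap_map_eq]
  refine SetLike.le_def.1 (sup_le ?_ ?_) hx'
  · refine (Submodule.baseChange_mono C hj).trans ((baseChange_smul_top_sup_ker_le _ f).trans ?_)
    exact sup_le_sup_right (Submodule.smul_mono_left hm) _
  · exact le_sup_of_le_left (Submodule.smul_mono_left (Ideal.pow_right_mono le_sup_right i))

end ArtinRees

section TensorToCompletion

variable (A : Type*) {C : Type*} [CommRing A] [CommRing C] [Algebra A C] (r : Ideal C)
  (M : Type*) {N : Type*} [AddCommGroup M] [Module A M] [AddCommGroup N] [Module A N]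

/-- The canonical comparison map from the tensor product of an `A`-module `M` with the `r`-adic
completion of an `A`-algebra `C` to the `r`-adic completion of `C ⊗[A] M`. -/
noncomputable def tensorToCompletion :
    AdicCompletion r C ⊗[A] M →ₗ[AdicCompletion r C] AdicCompletion r (C ⊗[A] M) :=
  AdicCompletion.ofTensorProduct r (C ⊗[A] M) ∘ₗ
    (AlgebraTensorModule.cancelBaseChange A C (AdicCompletion r C) (AdicCompletion r C) M).symm

variable {M} in
lemma tensorToCompletion_tmul (e : AdicCompletion r C) (x : M) :
    tensorToCompletion A r M (e ⊗ₜ x) = e • AdicCompletion.of r (C ⊗[A] M) (1 ⊗ₜ x) :=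
  rfl

variable {A M} in
lemma tensorToCompletion_baseChange (f : M →ₗ[A] N) (x : AdicCompletion r C ⊗[A] M) :
    tensorToCompletion A r N (f.baseChange (AdicCompletion r C) x) =
      AdicCompletion.map r (f.baseChange C) (tensorToCompletion A r M x) := by
  induction x with
  | zero => rw [map_zero, map_zero, map_zero, map_zero]
  | add x y hx hy => rw [map_add, map_add, map_add, map_add, hx, hy]
  | tmul e x =>
    rw [LinearMap.baseChange_tmul, tensorToCompletion_tmul, tensorToCompletion_tmul, map_smul,
      AdicCompletion.map_of, LinearMap.baseChange_tmul]

lemma tensorToCompletion_surjective [Module.Finite A M] :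
    Function.Surjective (tensorToCompletion A r M) :=
  (AdicCompletion.ofTensorProduct_surjective_of_finite r (C ⊗[A] M)).comp
    (LinearEquiv.surjective _)

lemma ofTensorProduct_injective_of_free (R M : Type*) [CommRing R] (I : Ideal R)
    [AddCommGroup M] [Module R M] [Module.Free R M] [Module.Finite R M] :
    Function.Injective (AdicCompletion.ofTensorProduct I M) := by
  let e : M ≃ₗ[R] (Module.Free.ChooseBasisIndex R M → R) := (Module.Free.chooseBasis R M).equivFun
  have hnat : ⇑(AdicCompletion.map I e.toLinearMap) ∘ AdicCompletion.ofTensorProduct I M =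
      AdicCompletion.ofTensorProduct I _ ∘ e.baseChange R (AdicCompletion I R) :=
    funext fun x ↦ congr($(AdicCompletion.ofTensorProduct_naturality I e.toLinearMap) x)
  refine Function.Injective.of_comp (f := AdicCompletion.map I e.toLinearMap) ?_
  rw [hnat]
  exact (AdicCompletion.ofTensorProduct_bijective_of_pi_of_fintype I _).injective.comp
    (LinearEquiv.injective _)

lemma tensorToCompletion_injective [Module.Free A M] [Module.Finite A M] :
    Function.Injective (tensorToCompletion A r M) :=
  (ofTensorProduct_injective_of_free C (C ⊗[A] M) r).comp (LinearEquiv.injective _)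

end TensorToCompletion

section Flatness

theorem flat_adicCompletion_map_sup {A C : Type*} [CommRing A] [IsNoetherianRing A] [CommRing C]
    [Algebra A C] [Module.Flat A C] (m : Ideal A) (F : Ideal C)
    (hF : ∀ i, Module.Flat A (C ⧸ F ^ i)) :
    Module.Flat A (AdicCompletion (m.map (algebraMap A C) ⊔ F) C) := by
  set r := m.map (algebraMap A C) ⊔ F
  set E := AdicCompletion r C
  refine Module.Flat.iff_lTensor_injective'.2 fun I ↦ (injective_iff_map_eq_zero _).2 fun x hx ↦ ?_
  obtain ⟨n, p, hp⟩ := Module.Finite.exists_fin' A I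
  let f : (Fin n → A) →ₗ[A] A := I.subtype ∘ₗ p
  let ι : LinearMap.ker f →ₗ[A] (Fin n → A) := (LinearMap.ker f).subtype
  have hexact : Function.Exact (AdicCompletion.map r (ι.baseChange C))
      (AdicCompletion.map r (f.baseChange C)) :=
    (isAdicStrict_baseChange m F hF ι).exact_adicCompletion_map (isAdicStrict_baseChange m F hF f)
      (Module.Flat.lTensor_exact C f.exact_subtype_ker_map)
  obtain ⟨y, rfl⟩ := LinearMap.lTensor_surjective E hp x
  have hy : f.baseChange E y = 0 := (LinearMap.lTensor_comp_apply E I.subtype p y).trans hx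
  have hτy : AdicCompletion.map r (f.baseChange C) (tensorToCompletion A r _ y) = 0 := by
    rw [← tensorToCompletion_baseChange, hy, map_zero]
  obtain ⟨w, hw⟩ := (hexact _).1 hτy
  obtain ⟨z, rfl⟩ := tensorToCompletion_surjective A r _ w
  rw [← tensorToCompletion_baseChange] at hw
  have hpι : p ∘ₗ ι = 0 := LinearMap.ext fun v ↦ Subtype.ext v.2
  rw [← tensorToCompletion_injective A r _ hw, LinearMap.baseChange_eq_ltensor,
    ← LinearMap.lTensor_comp_apply, hpι, LinearMap.lTensor_zero, LinearMap.zero_apply]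

variable (k A B : Type*) {C : Type*} [CommRing k] [CommRing A] [CommRing B] [CommRing C]
  [Algebra k A] [Algebra k B] [Algebra A C] [Algebra B C] [Algebra k C] [IsScalarTower k A C]
  [IsScalarTower k B C] [Algebra.IsPushout k A B C]

lemma flat_quotient_map_of_isPushout (n : Ideal B) [Module.Flat k (B ⧸ n)] :
    Module.Flat A (C ⧸ n.map (algebraMap B C)) :=
  Module.Flat.of_linearEquiv <| (Ideal.qoutMapEquivTensorQout C).restrictScalars A ≪≫ₗ
    Algebra.IsPushout.cancelBaseChange k A B C (B ⧸ n)

theorem flat_adicCompletion_of_isPushout [IsNoetherianRing A] [Module.Flat k B] {m : Ideal A}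
    {n : Ideal B} {r : Ideal C} (hn : ∀ i, Module.Flat k (B ⧸ n ^ i))
    (hr : r = m.map (algebraMap A C) ⊔ n.map (algebraMap B C)) :
    Module.Flat A (AdicCompletion r C) := by
  have : Module.Flat A C := .isBaseChange k A B C Algebra.IsPushout.out
  subst hr
  refine flat_adicCompletion_map_sup m _ fun i ↦ ?_
  rw [← Ideal.map_pow]
  exact flat_quotient_map_of_isPushout k A B (n ^ i)

end Flatness

theorem completedTensor_flat_of_isNoetherianRing_general (k A B : Type*) [Field k]
    [CommRing A] [CommRing B] [IsNoetherianRing A] [IsNoetherianRing B]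
    [Algebra k A] [Algebra k B] :
    letI : Algebra A (CompletedTensor k A B) :=
      ((algebraMap (A ⊗[k] B) (CompletedTensor k A B)).comp
        (Algebra.TensorProduct.includeLeft (R := k) (S := k) (A := A) (B := B)).toRingHom).toAlgebra
    letI : Algebra B (CompletedTensor k A B) :=
      ((algebraMap (A ⊗[k] B) (CompletedTensor k A B)).comp
        (Algebra.TensorProduct.includeRight (R := k) (A := A) (B := B)).toRingHom).toAlgebra
    Module.Flat A (CompletedTensor k A B) ∧ Module.Flat B (CompletedTensor k A B) := by
  let := Algebra.TensorProduct.rightAlgebra (R := k) (A := A) (B := B)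
  have hr : tensorRadical k A B = (⊥ : Ideal A).jacobson.map (algebraMap A (A ⊗[k] B)) ⊔
      (⊥ : Ideal B).jacobson.map (algebraMap B (A ⊗[k] B)) := rfl
  exact ⟨flat_adicCompletion_of_isPushout k A B (fun _ ↦ inferInstance) hr,
    flat_adicCompletion_of_isPushout k B A (fun _ ↦ inferInstance) (hr.trans (sup_comm _ _))⟩

/-- Let `A` and `B` be Noetherian local commutative rings containing a
field `k`. If the completed tensor product `A ⊗̂[k] B` is Noetherian, then it is flat as
an `A`-module and flat as a `B`-module (the module structures coming from the canonical
ring homomorphisms `A → A ⊗[k] B → A ⊗̂[k] B` and `B → A ⊗[k] B → A ⊗̂[k] B`). -/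
theorem completedTensor_flat_of_isNoetherianRing (k A B : Type*) [Field k]
    [CommRing A] [CommRing B] [IsNoetherianRing A] [IsNoetherianRing B]
    [IsLocalRing A] [IsLocalRing B] [Algebra k A] [Algebra k B]
    (hE : IsNoetherianRing (CompletedTensor k A B)) :
    letI : Algebra A (CompletedTensor k A B) :=
      ((algebraMap (A ⊗[k] B) (CompletedTensor k A B)).comp
        (Algebra.TensorProduct.includeLeft (R := k) (S := k) (A := A) (B := B)).toRingHom).toAlgebra
    letI : Algebra B (CompletedTensor k A B) :=
      ((algebraMap (A ⊗[k] B) (CompletedTensor k A B)).comp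
        (Algebra.TensorProduct.includeRight (R := k) (A := A) (B := B)).toRingHom).toAlgebra
    Module.Flat A (CompletedTensor k A B) ∧ Module.Flat B (CompletedTensor k A B) :=
  completedTensor_flat_of_isNoetherianRing_general k A B
end

section
/- Let A and B be two semilocal Noetherian commutative rings containing a field k such that the completed tensor product A⊗̂_k B is Noetherian. If for every maximal ideal m_r of A and every maximal ideal n_s of B at least one of the residue field extensions A/m_r or B/n_s is algebraic over k, then the Krull dimension of A⊗̂_k B equals dim(A) + dim(B). -/
open TensorProduct

/-!
Only two properties of `E = A ⊗̂[k] B` matter: it has the same quotients modulo powers of `r` as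
`C = A ⊗[k] B`, and `rE` lies in its Jacobson radical.

For `dim E ≥ dim A + dim B`, let `P < P'` and `Q ≤ Q'` be primes of `A` and `B` and pick
`a ∈ P' \ P`. Artin–Rees in `A` and flatness over `k` show that `a ⊗ 1` is a nonzerodivisor modulo
`P ⊗ B + A ⊗ Q` up to a shift of the `r`-adic filtration, so by Krull's intersection theorem it is
one in `E ⧸ (P, Q)E`. Hence `dim E ⧸ (P, Q)E` drops strictly along chains in `Spec A × Spec B`.

For `dim E ≤ dim A + dim B`, a maximal ideal `M` of `E` contracts to maximal ideals `p` of `A` and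
`q` of `B`. By algebraicity `A ⧸ p ⊗[k] B ⧸ q` is zero-dimensional, so `M` is minimal over
`pE + qE`, and Krull's height theorem gives `ht M ≤ ht p + ht q`.
-/

section KrullDim

theorem krullDim_add_krullDim_le_krullDim_prod (X Y : Type*) [Preorder X] [Preorder Y] :
    Order.krullDim X + Order.krullDim Y ≤ Order.krullDim (X × Y) := by
  rcases isEmpty_or_nonempty X with _ | _
  · simp [Order.krullDim_eq_bot]
  rcases isEmpty_or_nonempty Y with _ | _
  · simp [Order.krullDim_eq_bot]
  have chain (p : LTSeries X) (q : LTSeries Y) :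
      ((p.length : ℕ∞) + q.length : WithBot ℕ∞) ≤ Order.krullDim (X × Y) := by
    let p' : LTSeries (X × Y) := p.map (·, q.head) fun _ _ h ↦ Prod.mk_lt_mk_iff_left.mpr h
    let q' : LTSeries (X × Y) := q.map (p.last, ·) fun _ _ h ↦ Prod.mk_lt_mk_iff_right.mpr h
    exact mod_cast Order.LTSeries.length_le_krullDim (p'.smash q' rfl)
  rw [Order.krullDim_eq_iSup_length (α := X × Y)] at chain ⊢
  rw [Order.krullDim_eq_iSup_length, Order.krullDim_eq_iSup_length]
  norm_cast at chain ⊢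
  exact ENat.iSup_add_iSup_le chain

variable {X : Type*} [Preorder X] {d : X → WithBot ℕ∞}

theorem apply_last_add_length_le_apply_head (hlt : ∀ x y, x < y → d y + 1 ≤ d x) (p : LTSeries X) :
    d p.last + p.length ≤ d p.head := by
  induction p using RelSeries.inductionOn with
  | singleton x => simp
  | cons p x hx ih =>
    rw [RelSeries.last_cons, RelSeries.head_cons, RelSeries.cons_length]
    calc d p.last + (p.length + 1 : ℕ) = d p.last + p.length + 1 := by push_cast; rw [add_assoc]
      _ ≤ d p.head + 1 := by gcongr
      _ ≤ d x := hlt x p.head hx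

theorem krullDim_le_of_forall_lt_add_one_le (hd : ∀ x, 0 ≤ d x)
    (hlt : ∀ x y, x < y → d y + 1 ≤ d x) {c : WithBot ℕ∞} (hc : ∀ x, d x ≤ c) :
    Order.krullDim X ≤ c :=
  iSup_le fun p ↦ calc
    (p.length : WithBot ℕ∞) ≤ d p.last + p.length := le_add_of_nonneg_left (hd _)
    _ ≤ d p.head := apply_last_add_length_le_apply_head hlt p
    _ ≤ c := hc _

end KrullDim

section CommRing

variable {R : Type*} [CommRing R]

theorem exists_forall_colon_sup_pow_le [IsNoetherianRing R] (K I : Ideal R) (a : R) :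
    ∃ n₀ : ℕ, ∀ n : ℕ, (K ⊔ I ^ (n + n₀)).colon {a} ≤ K.colon {a} ⊔ I ^ n := by
  obtain ⟨n₀, hn₀⟩ := Ideal.exists_pow_inf_eq_pow_smul I (K ⊔ Ideal.span {a})
  have hle (n : ℕ) : I ^ (n + n₀) ⊓ (K ⊔ Ideal.span {a}) ≤ K ⊔ I ^ n * Ideal.span {a} := calc
    I ^ (n + n₀) ⊓ (K ⊔ Ideal.span {a}) = I ^ n • (I ^ n₀ • ⊤ ⊓ (K ⊔ Ideal.span {a})) := by
      simpa using hn₀ (n + n₀) le_add_self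
    _ ≤ I ^ n * (K ⊔ Ideal.span {a}) := Ideal.mul_mono_right inf_le_right
    _ ≤ K ⊔ I ^ n * Ideal.span {a} := by
      rw [Ideal.mul_sup]
      exact sup_le_sup_right Ideal.mul_le_right _
  refine ⟨n₀, fun n x hx ↦ ?_⟩
  rw [Submodule.mem_colon_singleton, smul_eq_mul] at hx
  obtain ⟨y, hy, z, hz, hyz⟩ := Submodule.mem_sup.mp hx
  have hz' : z ∈ K ⊔ Ideal.span {a} := by
    rw [eq_sub_of_add_eq' hyz]
    exact sub_mem (Ideal.mem_sup_right (Ideal.mul_mem_left _ _ (Ideal.mem_span_singleton_self a)))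
      (Ideal.mem_sup_left hy)
  obtain ⟨u, hu, v, hv, huv⟩ := Submodule.mem_sup.mp (hle n ⟨hz, hz'⟩)
  obtain ⟨w, hw, hwv⟩ := Ideal.mem_mul_span_singleton.mp hv
  refine Submodule.mem_sup.mpr ⟨x - w, ?_, w, hw, sub_add_cancel x w⟩
  have : (x - w) * a = y + u := by linear_combination -huv - hyz - hwv
  rw [Submodule.mem_colon_singleton, smul_eq_mul, this]
  exact add_mem hy hu

theorem colon_singleton_eq_of_notMem {P : Ideal R} [P.IsPrime] {a : R} (ha : a ∉ P) :
    P.colon {a} = P := by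
  ext x
  simp [Submodule.mem_colon_singleton, Ideal.IsPrime.mul_mem_iff_mem_or_mem, ha]

theorem iInf_sup_pow_eq_of_le_jacobson [IsNoetherianRing R] {I : Ideal R}
    (hI : I ≤ (⊥ : Ideal R).jacobson) (K : Ideal R) : ⨅ n : ℕ, K ⊔ I ^ n = K := by
  have hinf := Ideal.iInf_pow_smul_eq_bot_of_le_jacobson (M := R ⧸ K) I hI
  have hcomap (n : ℕ) : (I ^ n • ⊤ : Submodule R (R ⧸ K)).comap K.mkQ = K ⊔ I ^ n := by
    rw [← Submodule.range_mkQ K, ← Submodule.map_top, ← Submodule.map_smul'',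
      Submodule.comap_map_mkQ]
    simp
  calc ⨅ n : ℕ, K ⊔ I ^ n = (⨅ n, I ^ n • ⊤ : Submodule R (R ⧸ K)).comap K.mkQ := by
        simp_rw [Submodule.comap_iInf, hcomap]
    _ = K := by rw [hinf]; exact K.ker_mkQ

theorem sup_jacobson_bot_ne_top {K : Ideal R} (hK : K ≠ ⊤) : K ⊔ (⊥ : Ideal R).jacobson ≠ ⊤ := by
  obtain ⟨M, hM, hKM⟩ := Ideal.exists_le_maximal K hK
  exact ne_top_of_le_ne_top hM.ne_top (sup_le hKM (sInf_le ⟨bot_le, hM⟩))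

theorem isMaximal_of_jacobson_bot_le [Finite (MaximalSpectrum R)] {P : Ideal R} [hP : P.IsPrime]
    (h : (⊥ : Ideal R).jacobson ≤ P) : P.IsMaximal := by
  have := Fintype.ofFinite (MaximalSpectrum R)
  have hinf : Finset.univ.inf MaximalSpectrum.asIdeal ≤ P :=
    (le_sInf fun M hM ↦ Finset.inf_le (f := MaximalSpectrum.asIdeal)
      (Finset.mem_univ ⟨M, hM.2⟩)).trans h
  obtain ⟨M, -, hM⟩ := (Ideal.IsPrime.inf_le' hP).mp hinf
  exact M.isMaximal.eq_of_le hP.ne_top hM ▸ M.isMaximal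

variable {A B E : Type*} [CommRing A] [CommRing B] [CommRing E]
  [IsNoetherianRing A] [IsNoetherianRing B] [IsNoetherianRing E]

theorem height_le_height_comap_add_height_comap {α : A →+* E} {β : B →+* E} {M : Ideal E}
    [M.IsPrime] (hM : M ∈ ((M.comap α).map α ⊔ (M.comap β).map β).minimalPrimes) :
    M.height ≤ (M.comap α).height + (M.comap β).height := by
  classical
  obtain ⟨s, hs, hs_card⟩ := (M.comap α).exists_finset_card_eq_height_of_isNoetherianRing
  obtain ⟨t, ht, ht_card⟩ := (M.comap β).exists_finset_card_eq_height_of_isNoetherianRing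
  have hspan : Ideal.span ((s.image α ∪ t.image β : Finset E) : Set E) =
      (Ideal.span s).map α ⊔ (Ideal.span t).map β := by
    simp only [Finset.coe_union, Finset.coe_image, Ideal.span_union, Ideal.map_span]
  have hmin : M ∈ (Ideal.span ((s.image α ∪ t.image β : Finset E) : Set E)).minimalPrimes := by
    rw [hspan]
    refine ⟨⟨‹_›, sup_le (Ideal.map_le_iff_le_comap.mpr hs.1.2)
      (Ideal.map_le_iff_le_comap.mpr ht.1.2)⟩, fun P ⟨hP, hle⟩ hPM ↦ hM.2 ⟨hP, ?_⟩ hPM⟩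
    obtain ⟨hsP, htP⟩ := sup_le_iff.mp hle
    exact sup_le
      (Ideal.map_le_iff_le_comap.mpr
        (hs.2 ⟨inferInstance, Ideal.map_le_iff_le_comap.mp hsP⟩ (Ideal.comap_mono hPM)))
      (Ideal.map_le_iff_le_comap.mpr
        (ht.2 ⟨inferInstance, Ideal.map_le_iff_le_comap.mp htP⟩ (Ideal.comap_mono hPM)))
  calc M.height ≤ (s.image α ∪ t.image β).card :=
        Ideal.height_le_card_of_mem_minimalPrimes_span_finset hmin
    _ ≤ s.card + t.card := mod_cast (Finset.card_union_le _ _).trans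
        (add_le_add Finset.card_image_le Finset.card_image_le)
    _ = (M.comap α).height + (M.comap β).height := by rw [hs_card, ht_card]

end CommRing

theorem krullDimLE_zero_of_isIntegral (R S : Type*) [CommRing R] [CommRing S] [Algebra R S]
    [Algebra.IsIntegral R S] [Ring.KrullDimLE 0 R] : Ring.KrullDimLE 0 S :=
  .mk₀ fun P _ ↦ Ideal.isMaximal_of_isIntegral_of_isMaximal_comap (R := R) P inferInstance

theorem krullDimLE_zero_tensorProduct {R K L : Type*} [CommRing R] [CommRing K] [CommRing L]
    [Algebra R K] [Algebra R L] [Ring.KrullDimLE 0 K] [Ring.KrullDimLE 0 L]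
    (h : Algebra.IsIntegral R K ∨ Algebra.IsIntegral R L) : Ring.KrullDimLE 0 (K ⊗[R] L) := by
  rcases h with _ | _
  · have := krullDimLE_zero_of_isIntegral L (L ⊗[R] K)
    rw [Ring.krullDimLE_iff] at this ⊢
    rwa [ringKrullDim_eq_of_ringEquiv (Algebra.TensorProduct.comm R K L).toRingEquiv]
  · exact krullDimLE_zero_of_isIntegral K (K ⊗[R] L)

/-- The `R`-algebra `E` behaves like a completion of `R` along `I`: the extension of `I` lies in
the Jacobson radical, and `R ⧸ I ^ n → E ⧸ I ^ n E` is bijective for all `n`. No completeness of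
`E` is required, so that the localization of `R` at `1 + I` qualifies as well as the adic
completion along a finitely generated `I`. -/
structure IsPartialAdicCompletion {R : Type*} [CommRing R] (I : Ideal R) (E : Type*) [CommRing E]
    [Algebra R E] : Prop where
  map_le_jacobson : I.map (algebraMap R E) ≤ (⊥ : Ideal E).jacobson
  comap_map_pow_le (n : ℕ) : ((I ^ n).map (algebraMap R E)).comap (algebraMap R E) ≤ I ^ n
  exists_sub_algebraMap_mem (n : ℕ) (x : E) :
    ∃ r, x - algebraMap R E r ∈ (I ^ n).map (algebraMap R E)

/-- Multiplication by `t` is injective on the projective system of the `R ⧸ (K ⊔ I ^ n)`, up to a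
shift of the index. For `R` Noetherian, Artin–Rees provides this whenever `t` is a nonzerodivisor
modulo `K`; the condition is inherited by tensor products, which need not be Noetherian. -/
def IsAdicallyRegular {R : Type*} [CommRing R] (I K : Ideal R) (t : R) : Prop :=
  ∀ n : ℕ, ∃ l : ℕ, (K ⊔ I ^ l).colon {t} ≤ K ⊔ I ^ n

theorem isAdicallyRegular_of_notMem {R : Type*} [CommRing R] [IsNoetherianRing R] (I : Ideal R)
    {P : Ideal R} [P.IsPrime] {a : R} (ha : a ∉ P) : IsAdicallyRegular I P a := fun n ↦
  have ⟨n₀, h⟩ := exists_forall_colon_sup_pow_le P I a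
  ⟨n + n₀, (h n).trans_eq (by rw [colon_singleton_eq_of_notMem ha])⟩

theorem isPartialAdicCompletion_adicCompletion {R : Type*} [CommRing R] {I : Ideal R} (hI : I.FG) :
    IsPartialAdicCompletion I (AdicCompletion I R) := by
  have ker_eval (n : ℕ) : RingHom.ker (AdicCompletion.evalₐ I n) =
      (I ^ n).map (algebraMap R (AdicCompletion I R)) := by
    ext x
    have hx : AdicCompletion.eval I R n x = 0 ↔
        x ∈ (I ^ n).map (algebraMap R (AdicCompletion I R)) := by
      rw [← LinearMap.mem_ker, ← AdicCompletion.pow_smul_top_eq_ker_eval hI]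
      simp
    rw [← hx, RingHom.mem_ker]
    refine ⟨fun h ↦ ?_, fun h ↦ ?_⟩
    · rw [← AdicCompletion.factor_evalₐ_eq_eval I x (by simp), h, map_zero]
    · rw [← AdicCompletion.factor_eval_eq_evalₐ I x (by simp), h, map_zero]
  have := AdicCompletion.isAdicComplete_self I hI
  refine ⟨IsAdicComplete.le_jacobson_bot _, fun n r hr ↦ ?_, fun n x ↦ ?_⟩
  · rw [Ideal.mem_comap, ← ker_eval, RingHom.mem_ker, AlgHom.commutes] at hr
    exact Ideal.Quotient.eq_zero_iff_mem.mp hr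
  · obtain ⟨r, hr⟩ := Ideal.Quotient.mk_surjective (AdicCompletion.evalₐ I n x)
    refine ⟨r, ?_⟩
    rw [← ker_eval, RingHom.mem_ker, map_sub, AlgHom.commutes, ← hr]
    exact sub_self _

namespace IsPartialAdicCompletion

variable {R E : Type*} [CommRing R] [CommRing E] [Algebra R E] {I : Ideal R}

theorem surjective_algebraMap_quotient (h : IsPartialAdicCompletion I E) {n : ℕ} {J : Ideal E}
    (hJ : (I ^ n).map (algebraMap R E) ≤ J) : Function.Surjective (algebraMap R (E ⧸ J)) := by
  intro y
  obtain ⟨x, rfl⟩ := Ideal.Quotient.mk_surjective y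
  obtain ⟨r, hr⟩ := h.exists_sub_algebraMap_mem n x
  exact ⟨r, (Ideal.Quotient.eq.mpr (hJ hr)).symm⟩

theorem comap_map_le_of_pow_le (h : IsPartialAdicCompletion I E) {n : ℕ} {J : Ideal R}
    (hJ : I ^ n ≤ J) : (J.map (algebraMap R E)).comap (algebraMap R E) ≤ J := by
  let π := Ideal.Quotient.mk ((I ^ n).map (algebraMap R E))
  intro r hr
  have hr' : π (algebraMap R E r) ∈ (J.map (algebraMap R E)).map π := Ideal.mem_map_of_mem π hr
  rw [Ideal.map_map] at hr'
  obtain ⟨s, hs, hsr⟩ := (Ideal.mem_map_iff_of_surjective (π.comp (algebraMap R E))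
    (h.surjective_algebraMap_quotient le_rfl)).mp hr'
  have : r - s ∈ I ^ n := h.comap_map_pow_le n <| by
    rw [Ideal.mem_comap, map_sub]
    exact Ideal.Quotient.eq.mp hsr.symm
  exact (Submodule.sub_mem_iff_left J hs).mp (hJ this)

theorem map_ne_top (h : IsPartialAdicCompletion I E) {K : Ideal R} (hK : K ⊔ I ≠ ⊤) :
    K.map (algebraMap R E) ≠ ⊤ := fun htop ↦
  hK <| (Ideal.eq_top_iff_one _).mpr <|
    h.comap_map_le_of_pow_le (n := 1) (by simp) (Ideal.map_mono le_sup_left (by simp [htop]))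

theorem isMaximal_of_isMaximal_comap (h : IsPartialAdicCompletion I E) {P : Ideal E}
    [P.IsPrime] (hIP : I.map (algebraMap R E) ≤ P)
    (hmax : (P.comap (algebraMap R E)).IsMaximal) : P.IsMaximal := by
  have hsurj := h.surjective_algebraMap_quotient (n := 1) (J := P) (by rwa [pow_one])
  have hker : (⊥ : Ideal (E ⧸ P)).comap (algebraMap R (E ⧸ P)) = P.comap (algebraMap R E) :=
    Ideal.ext fun _ ↦ Ideal.Quotient.eq_zero_iff_mem
  exact (Ideal.bot_quotient_isMaximal_iff P).mp <|
    Ideal.isMaximal_of_isIntegral_of_isMaximal_comap' _ (RingHom.isIntegral_of_surjective _ hsurj)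
      ⊥ (hker ▸ hmax)

theorem mem_map_of_algebraMap_mul_mem [IsNoetherianRing E] (h : IsPartialAdicCompletion I E)
    {K : Ideal R} {t : R} (ht : IsAdicallyRegular I K t) {x : E}
    (hx : x * algebraMap R E t ∈ K.map (algebraMap R E)) : x ∈ K.map (algebraMap R E) := by
  rw [← iInf_sup_pow_eq_of_le_jacobson h.map_le_jacobson (K.map (algebraMap R E)),
    Submodule.mem_iInf]
  intro n
  rw [← Ideal.map_pow, ← Ideal.map_sup]
  obtain ⟨l, hl⟩ := ht n
  obtain ⟨r, hr⟩ := h.exists_sub_algebraMap_mem (max n l) x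
  have hmem {j : ℕ} (hj : j ≤ max n l) : x - algebraMap R E r ∈ (K ⊔ I ^ j).map (algebraMap R E) :=
    Ideal.map_mono ((Ideal.pow_le_pow_right hj).trans le_sup_right) hr
  have hrt : r * t ∈ K ⊔ I ^ l := h.comap_map_le_of_pow_le le_sup_right <| by
    have : algebraMap R E (r * t) =
        x * algebraMap R E t - (x - algebraMap R E r) * algebraMap R E t := by
      rw [map_mul]
      ring
    rw [Ideal.mem_comap, this]
    exact sub_mem (Ideal.map_mono le_sup_left hx)
      (Ideal.mul_mem_right _ _ (hmem (le_max_right n l)))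
  have hr' : r ∈ K ⊔ I ^ n := hl (Submodule.mem_colon_singleton.mpr hrt)
  exact (Submodule.sub_mem_iff_left _ (Ideal.mem_map_of_mem _ hr')).mp (hmem (le_max_left n l))

theorem ringKrullDim_quotient_map_succ_le [IsNoetherianRing E] (h : IsPartialAdicCompletion I E)
    {K K' : Ideal R} (hK : K ≤ K') {t : R} (ht : t ∈ K') (hreg : IsAdicallyRegular I K t) :
    ringKrullDim (E ⧸ K'.map (algebraMap R E)) + 1 ≤
      ringKrullDim (E ⧸ K.map (algebraMap R E)) := by
  have hle := Ideal.map_mono (f := algebraMap R E) hK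
  refine ringKrullDim_succ_le_of_surjective (Ideal.Quotient.factor hle)
    (Ideal.Quotient.factor_surjective hle) (r := algebraMap R _ t) ?_ ?_
  · refine mem_nonZeroDivisors_iff_right.mpr fun y hy ↦ ?_
    obtain ⟨x, rfl⟩ := Ideal.Quotient.mk_surjective y
    exact Ideal.Quotient.eq_zero_iff_mem.mpr
      (h.mem_map_of_algebraMap_mul_mem hreg (Ideal.Quotient.eq_zero_iff_mem.mp hy))
  · exact Ideal.Quotient.eq_zero_iff_mem.mpr (Ideal.mem_map_of_mem _ ht)

end IsPartialAdicCompletion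

section TensorIdeal

section CommRing

variable (k : Type*) {A B : Type*} [CommRing k] [CommRing A] [CommRing B]
  [Algebra k A] [Algebra k B]

/-- The ideal `U ⊗ B + A ⊗ V` of `A ⊗[k] B`, that is, the kernel of
`A ⊗[k] B → (A ⧸ U) ⊗[k] (B ⧸ V)`. -/
noncomputable def tensorIdeal (U : Ideal A) (V : Ideal B) : Ideal (A ⊗[k] B) :=
  U.map (Algebra.TensorProduct.includeLeft (R := k) (S := k) (A := A) (B := B)) ⊔
    V.map (Algebra.TensorProduct.includeRight (R := k) (A := A) (B := B))

theorem ker_map_mkₐ_mkₐ (U : Ideal A) (V : Ideal B) :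
    RingHom.ker (Algebra.TensorProduct.map (Ideal.Quotient.mkₐ k U) (Ideal.Quotient.mkₐ k V)) =
      tensorIdeal k U V := by
  rw [Algebra.TensorProduct.map_ker _ _ (Ideal.Quotient.mkₐ_surjective k U)
    (Ideal.Quotient.mkₐ_surjective k V)]
  exact congrArg₂ (Ideal.map _ · ⊔ Ideal.map _ ·) (Ideal.Quotient.mkₐ_ker k U)
    (Ideal.Quotient.mkₐ_ker k V)

theorem tensorIdeal_mono {U U' : Ideal A} {V V' : Ideal B} (hU : U ≤ U') (hV : V ≤ V') :
    tensorIdeal k U V ≤ tensorIdeal k U' V' :=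
  sup_le_sup (Ideal.map_mono hU) (Ideal.map_mono hV)

theorem tensorIdeal_sup_sup (U U' : Ideal A) (V V' : Ideal B) :
    tensorIdeal k (U ⊔ U') (V ⊔ V') = tensorIdeal k U V ⊔ tensorIdeal k U' V' := by
  simp only [tensorIdeal, Ideal.map_sup]
  exact sup_sup_sup_comm _ _ _ _

theorem tensorIdeal_pow_add_le (U : Ideal A) (V : Ideal B) (m n : ℕ) :
    tensorIdeal k U V ^ (m + n) ≤ tensorIdeal k (U ^ m) (V ^ n) := by
  simp only [tensorIdeal, Ideal.map_pow]
  exact Ideal.sup_pow_add_le_pow_sup_pow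

theorem tensorIdeal_pow_pow_le (U : Ideal A) (V : Ideal B) (n : ℕ) :
    tensorIdeal k (U ^ n) (V ^ n) ≤ tensorIdeal k U V ^ n := by
  simp only [tensorIdeal, Ideal.map_pow]
  exact sup_le (Ideal.pow_right_mono le_sup_left _) (Ideal.pow_right_mono le_sup_right _)

theorem tensorIdeal_fg {U : Ideal A} {V : Ideal B} (hU : U.FG) (hV : V.FG) :
    (tensorIdeal k U V).FG :=
  Submodule.FG.sup (hU.map _) (hV.map _)

variable {k}

theorem tmul_mem_tensorIdeal_of_left {U : Ideal A} {a : A} (ha : a ∈ U) (V : Ideal B) (b : B) :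
    a ⊗ₜ[k] b ∈ tensorIdeal k U V := by
  rw [← ker_map_mkₐ_mkₐ]
  simp [RingHom.mem_ker, Ideal.Quotient.eq_zero_iff_mem.mpr ha]

theorem tmul_mem_tensorIdeal_of_right (U : Ideal A) (a : A) {V : Ideal B} {b : B} (hb : b ∈ V) :
    a ⊗ₜ[k] b ∈ tensorIdeal k U V := by
  rw [← ker_map_mkₐ_mkₐ]
  simp [RingHom.mem_ker, Ideal.Quotient.eq_zero_iff_mem.mpr hb]

theorem isMaximal_of_tensorIdeal_le {p : Ideal A} {q : Ideal B} [p.IsMaximal] [q.IsMaximal]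
    (h : Algebra.IsIntegral k (A ⧸ p) ∨ Algebra.IsIntegral k (B ⧸ q)) {P : Ideal (A ⊗[k] B)}
    [P.IsPrime] (hP : tensorIdeal k p q ≤ P) : P.IsMaximal := by
  let f := Algebra.TensorProduct.map (Ideal.Quotient.mkₐ k p) (Ideal.Quotient.mkₐ k q)
  have hf : Function.Surjective f := Algebra.TensorProduct.map_surjective _ _
    (Ideal.Quotient.mkₐ_surjective k p) (Ideal.Quotient.mkₐ_surjective k q)
  have hker : RingHom.ker f ≤ P := (ker_map_mkₐ_mkₐ k p q).trans_le hP
  let _ := Ideal.Quotient.field p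
  let _ := Ideal.Quotient.field q
  have := krullDimLE_zero_tensorProduct h
  have := Ideal.map_isPrime_of_surjective hf hker
  have : (P.map f).IsMaximal := inferInstance
  have hP' : (P.map f).comap f = P := by
    rw [Ideal.comap_map_of_surjective' f hf, sup_eq_left.mpr hker]
  exact hP' ▸ Ideal.comap_isMaximal_of_surjective f hf

theorem exists_tmul_mem_tensorIdeal_of_lt {x y : PrimeSpectrum A × PrimeSpectrum B} (hxy : x < y) :
    ∃ a ∉ x.1.asIdeal, ∃ b ∉ x.2.asIdeal,
      a ⊗ₜ[k] b ∈ tensorIdeal k y.1.asIdeal y.2.asIdeal := by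
  rcases Prod.lt_iff.mp hxy with ⟨hlt, -⟩ | ⟨-, hlt⟩
  · obtain ⟨a, hay, hax⟩ := SetLike.exists_of_lt (show x.1.asIdeal < y.1.asIdeal from hlt)
    exact ⟨a, hax, 1, x.2.isPrime.one_notMem, tmul_mem_tensorIdeal_of_left hay _ 1⟩
  · obtain ⟨b, hby, hbx⟩ := SetLike.exists_of_lt (show x.2.asIdeal < y.2.asIdeal from hlt)
    exact ⟨1, x.1.isPrime.one_notMem, b, hbx, tmul_mem_tensorIdeal_of_right _ 1 hby⟩

end CommRing

section Field

variable {k A B : Type*} [Field k] [CommRing A] [CommRing B] [Algebra k A] [Algebra k B]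

theorem tensorIdeal_ne_top {U : Ideal A} {V : Ideal B} (hU : U ≠ ⊤) (hV : V ≠ ⊤) :
    tensorIdeal k U V ≠ ⊤ := by
  have := Ideal.Quotient.nontrivial_iff.mpr hU
  have := Ideal.Quotient.nontrivial_iff.mpr hV
  exact ker_map_mkₐ_mkₐ k U V ▸ RingHom.ker_ne_top _

/-- The map `A ⧸ (U : a) → A ⧸ U` induced by multiplication by `a`. -/
def mulRightQuotientColon (U : Ideal A) (a : A) : A ⧸ U.colon {a} →ₗ[A] A ⧸ U :=
  Submodule.mapQ _ U (LinearMap.mulRight A a) fun _ hx ↦ Submodule.mem_colon_singleton.mp hx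

theorem mulRightQuotientColon_injective (U : Ideal A) (a : A) :
    Function.Injective (mulRightQuotientColon U a) := by
  refine (injective_iff_map_eq_zero _).mpr fun y hy ↦ ?_
  obtain ⟨x, rfl⟩ := Submodule.Quotient.mk_surjective _ y
  have hxa : x * a ∈ U := (Submodule.Quotient.mk_eq_zero U).mp hy
  exact (Submodule.Quotient.mk_eq_zero _).mpr (Submodule.mem_colon_singleton.mpr hxa)

theorem tensorIdeal_colon_tmul_le (U : Ideal A) (V : Ideal B) (a : A) (b : B) :
    (tensorIdeal k U V).colon {a ⊗ₜ[k] b} ≤ tensorIdeal k (U.colon {a}) (V.colon {b}) := by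
  let ι := (mulRightQuotientColon U a).restrictScalars k
  let κ := (mulRightQuotientColon V b).restrictScalars k
  have hinj : Function.Injective (TensorProduct.map ι κ) :=
    TensorProduct.map_injective_of_flat_flat ι κ (mulRightQuotientColon_injective U a)
      (mulRightQuotientColon_injective V b)
  have hmap (c : A ⊗[k] B) : TensorProduct.map ι κ (Algebra.TensorProduct.map
      (Ideal.Quotient.mkₐ k (U.colon {a})) (Ideal.Quotient.mkₐ k (V.colon {b})) c) =
      Algebra.TensorProduct.map (Ideal.Quotient.mkₐ k U) (Ideal.Quotient.mkₐ k V)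
        (c * a ⊗ₜ[k] b) := by
    induction c with
    | zero => simp
    | add c d hc hd => rw [add_mul, map_add, map_add, map_add, hc, hd]
    | tmul x y =>
      rw [Algebra.TensorProduct.tmul_mul_tmul, Algebra.TensorProduct.map_tmul,
        Algebra.TensorProduct.map_tmul, TensorProduct.map_tmul]
      rfl
  intro c hc
  rw [Submodule.mem_colon_singleton, smul_eq_mul, ← ker_map_mkₐ_mkₐ, RingHom.mem_ker, ← hmap] at hc
  rw [← ker_map_mkₐ_mkₐ, RingHom.mem_ker]
  exact hinj (hc.trans (map_zero _).symm)

theorem IsAdicallyRegular.tmul {m P : Ideal A} {n Q : Ideal B} {a : A} {b : B}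
    (ha : IsAdicallyRegular m P a) (hb : IsAdicallyRegular n Q b) :
    IsAdicallyRegular (tensorIdeal k m n) (tensorIdeal k P Q) (a ⊗ₜ[k] b) := by
  intro i
  obtain ⟨s, hs⟩ := ha i
  obtain ⟨t, ht⟩ := hb i
  refine ⟨s + t, ?_⟩
  calc (tensorIdeal k P Q ⊔ tensorIdeal k m n ^ (s + t)).colon {a ⊗ₜ[k] b}
      ≤ (tensorIdeal k (P ⊔ m ^ s) (Q ⊔ n ^ t)).colon {a ⊗ₜ[k] b} := by
        rw [tensorIdeal_sup_sup]
        exact Submodule.colon_mono (sup_le_sup_left (tensorIdeal_pow_add_le k m n s t) _) le_rfl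
    _ ≤ tensorIdeal k ((P ⊔ m ^ s).colon {a}) ((Q ⊔ n ^ t).colon {b}) :=
        tensorIdeal_colon_tmul_le _ _ a b
    _ ≤ tensorIdeal k (P ⊔ m ^ i) (Q ⊔ n ^ i) := tensorIdeal_mono k hs ht
    _ ≤ tensorIdeal k P Q ⊔ tensorIdeal k m n ^ i := by
        rw [tensorIdeal_sup_sup]
        exact sup_le_sup_left (tensorIdeal_pow_pow_le k m n i) _

end Field

end TensorIdeal

section Bounds

variable {k A B E : Type*} [Field k] [CommRing A] [CommRing B] [Algebra k A] [Algebra k B]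
  [CommRing E] [Algebra (A ⊗[k] B) E] [IsNoetherianRing A] [IsNoetherianRing B]
  [IsNoetherianRing E] {m : Ideal A} {n : Ideal B}

theorem IsPartialAdicCompletion.ringKrullDim_add_ringKrullDim_le
    (h : IsPartialAdicCompletion (tensorIdeal k m n) E)
    (hm : m ≤ (⊥ : Ideal A).jacobson) (hn : n ≤ (⊥ : Ideal B).jacobson) :
    ringKrullDim A + ringKrullDim B ≤ ringKrullDim E := by
  let d (x : PrimeSpectrum A × PrimeSpectrum B) : WithBot ℕ∞ :=
    ringKrullDim (E ⧸ (tensorIdeal k x.1.asIdeal x.2.asIdeal).map (algebraMap _ E))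
  have hd (x) : 0 ≤ d x := by
    have := Ideal.Quotient.nontrivial_iff.mpr <| h.map_ne_top <| by
      rw [← tensorIdeal_sup_sup]
      exact tensorIdeal_ne_top
        (ne_top_of_le_ne_top (sup_jacobson_bot_ne_top x.1.isPrime.ne_top) (sup_le_sup_left hm _))
        (ne_top_of_le_ne_top (sup_jacobson_bot_ne_top x.2.isPrime.ne_top) (sup_le_sup_left hn _))
    exact ringKrullDim_nonneg_of_nontrivial
  have hlt (x y) (hxy : x < y) : d y + 1 ≤ d x := by
    obtain ⟨a, ha, b, hb, hab⟩ := exists_tmul_mem_tensorIdeal_of_lt (k := k) hxy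
    exact h.ringKrullDim_quotient_map_succ_le (tensorIdeal_mono k hxy.le.1 hxy.le.2) hab
      ((isAdicallyRegular_of_notMem m ha).tmul (isAdicallyRegular_of_notMem n hb))
  calc ringKrullDim A + ringKrullDim B
      ≤ Order.krullDim (PrimeSpectrum A × PrimeSpectrum B) :=
        krullDim_add_krullDim_le_krullDim_prod _ _
    _ ≤ ringKrullDim E :=
        krullDim_le_of_forall_lt_add_one_le hd hlt fun _ ↦ ringKrullDim_quotient_le _

theorem IsPartialAdicCompletion.height_le_ringKrullDim_add_ringKrullDim
    (h : IsPartialAdicCompletion (tensorIdeal k m n) E)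
    (hm : ∀ p : Ideal A, p.IsPrime → m ≤ p → p.IsMaximal)
    (hn : ∀ q : Ideal B, q.IsPrime → n ≤ q → q.IsMaximal)
    (halg : ∀ (p : MaximalSpectrum A) (q : MaximalSpectrum B),
      Algebra.IsAlgebraic k (A ⧸ p.asIdeal) ∨ Algebra.IsAlgebraic k (B ⧸ q.asIdeal))
    (M : Ideal E) [hM : M.IsMaximal] : M.height ≤ ringKrullDim A + ringKrullDim B := by
  let α : A →+* E := (algebraMap (A ⊗[k] B) E).comp Algebra.TensorProduct.includeLeftRingHom
  let β : B →+* E := (algebraMap (A ⊗[k] B) E).comp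
    (Algebra.TensorProduct.includeRight : B →ₐ[k] A ⊗[k] B).toRingHom
  have hmap (U : Ideal A) (V : Ideal B) :
      (tensorIdeal k U V).map (algebraMap _ E) = U.map α ⊔ V.map β := by
    rw [tensorIdeal, Ideal.map_sup]
    exact congrArg₂ _ (Ideal.map_map _ _) (Ideal.map_map _ _)
  have hIM := h.map_le_jacobson.trans (sInf_le ⟨bot_le, hM⟩)
  rw [hmap, sup_le_iff, Ideal.map_le_iff_le_comap, Ideal.map_le_iff_le_comap] at hIM
  have hp : (M.comap α).IsMaximal := hm _ inferInstance hIM.1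
  have hq : (M.comap β).IsMaximal := hn _ inferInstance hIM.2
  have hmin : M ∈ ((M.comap α).map α ⊔ (M.comap β).map β).minimalPrimes := by
    refine ⟨⟨hM.isPrime, sup_le Ideal.map_comap_le Ideal.map_comap_le⟩, ?_⟩
    rintro P ⟨hP, hpqP⟩ hPM
    rw [← hmap] at hpqP
    have hIP := (Ideal.map_mono (tensorIdeal_mono k hIM.1 hIM.2)).trans hpqP
    have hPmax := h.isMaximal_of_isMaximal_comap hIP <|
      isMaximal_of_tensorIdeal_le ((halg ⟨_, hp⟩ ⟨_, hq⟩).imp (fun h ↦ h.isIntegral)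
        (fun h ↦ h.isIntegral)) (Ideal.map_le_iff_le_comap.mp hpqP)
    exact (hPmax.eq_of_le hM.ne_top hPM).ge
  calc (M.height : WithBot ℕ∞) ≤ ((M.comap α).height + (M.comap β).height : ℕ∞) :=
        mod_cast height_le_height_comap_add_height_comap hmin
    _ = (M.comap α).height + (M.comap β).height := WithBot.coe_add _ _
    _ ≤ ringKrullDim A + ringKrullDim B :=
        add_le_add Ideal.height_le_ringKrullDim_of_isPrime Ideal.height_le_ringKrullDim_of_isPrime

theorem ringKrullDim_completedTensor_of_algebraic_general
    (h : IsPartialAdicCompletion (tensorIdeal k m n) E)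
    (hmJ : m ≤ (⊥ : Ideal A).jacobson) (hnJ : n ≤ (⊥ : Ideal B).jacobson)
    (hm : ∀ p : Ideal A, p.IsPrime → m ≤ p → p.IsMaximal)
    (hn : ∀ q : Ideal B, q.IsPrime → n ≤ q → q.IsMaximal)
    (halg : ∀ (p : MaximalSpectrum A) (q : MaximalSpectrum B),
      Algebra.IsAlgebraic k (A ⧸ p.asIdeal) ∨ Algebra.IsAlgebraic k (B ⧸ q.asIdeal)) :
    ringKrullDim E = ringKrullDim A + ringKrullDim B :=
  le_antisymm
    (ringKrullDim_le_iff_isMaximal_height_le _ |>.mpr fun M _ ↦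
      h.height_le_ringKrullDim_add_ringKrullDim hm hn halg M)
    (h.ringKrullDim_add_ringKrullDim_le hmJ hnJ)

end Bounds

/-- Let `A` and `B` be two semilocal Noetherian commutative rings
containing a field `k` such that `A ⊗̂[k] B` is Noetherian. If for every maximal ideal
`m_r` of `A` and every maximal ideal `n_s` of `B` at least one of the residue field
extensions `A ⧸ m_r` or `B ⧸ n_s` is algebraic over `k`, then
`dim (A ⊗̂[k] B) = dim A + dim B`. -/
theorem ringKrullDim_completedTensor_of_algebraic (k A B : Type*) [Field k]
    [CommRing A] [CommRing B] [IsNoetherianRing A] [IsNoetherianRing B]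
    [Algebra k A] [Algebra k B]
    [Finite (MaximalSpectrum A)] [Finite (MaximalSpectrum B)]
    (hE : IsNoetherianRing (CompletedTensor k A B))
    (halg : ∀ (p : MaximalSpectrum A) (q : MaximalSpectrum B),
      Algebra.IsAlgebraic k (A ⧸ p.asIdeal) ∨ Algebra.IsAlgebraic k (B ⧸ q.asIdeal)) :
    ringKrullDim (CompletedTensor k A B) = ringKrullDim A + ringKrullDim B :=
  ringKrullDim_completedTensor_of_algebraic_general
    (isPartialAdicCompletion_adicCompletion
      (tensorIdeal_fg k (IsNoetherian.noetherian _) (IsNoetherian.noetherian _)))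
    le_rfl le_rfl (fun _ _ ↦ isMaximal_of_jacobson_bot_le) (fun _ _ ↦ isMaximal_of_jacobson_bot_le)
    halg
end

section
/- Let σ : A → B be a flat local homomorphism of Noetherian local commutative rings, with m the maximal ideal of A. Assume the formal fibers of A are geometrically reduced, i.e. for every prime ideal p of A the fiber κ(p)⊗_A Â of the completion map A → Â is geometrically reduced over the residue field κ(p). If the closed fiber B/mB is geometrically reduced over A/m, then σ is a reduced homomorphism, i.e. for every prime ideal p of A the fiber B⊗_A κ(p) is geometrically reduced over κ(p). -/
open TensorProduct IsLocalRing

universe u v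

/-- An algebra `R` over a field `F` is geometrically reduced if `L ⊗[F] R` is reduced
for every finite field extension `L` of `F`. -/
def GeometricallyReduced (F : Type u) (R : Type v) [Field F] [CommRing R]
    [Algebra F R] : Prop :=
  ∀ (L : Type u) [Field L] [Algebra F L] [FiniteDimensional F L], IsReduced (L ⊗[F] R)

/-!
Fix a prime `p` and a finite extension `L` of `κ(p)`. Clearing denominators, `L ⊗[A] B` is reduced
as soon as `D ⊗[A] B` is reduced for every finite `A`-subalgebra `D` of `L`; for such `D` the
completion `Â ⊗[A] D` is reduced, being contained in the formal fibre `Â ⊗[A] L`.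

Let `b` be a nilpotent of the flat `D`-algebra `E = D ⊗[A] B`, and `I = mD`. If `φ : D → V` is a
map to a valuation ring with `I V ≠ V`, then `E ⊗ V` is flat over `V` with reduced closed fibre, so
nonzero nilpotents of it have no content. Hence the content of `b` lies, for every `k`, in the ideal
of all `x` such that `φ x ∈ Iᵏ V` for every `φ`. In the complete reduced ring `Â ⊗[A] D` these
ideals intersect in zero and so, by Chevalley's theorem, are cofinal with the powers of the ideal
`m`; therefore `b ∈ Iⁿ E` for all `n`, and `b = 0` by Krull's intersection theorem in the finite
`B`-module `E`.
-/

/-! ### The valuative closure of an ideal -/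

theorem mem_minimalPrimes_span_singleton_of_mem_forall_prime {T : Type*} [CommRing T] [IsDomain T]
    [IsNoetherianRing T] {y : T} (hy : y ≠ 0)
    (hmem : ∀ q : Ideal T, q.IsPrime → q ≠ ⊥ → y ∈ q) {M : Ideal T} (hM : M.IsPrime)
    (hM0 : M ≠ ⊥) : M ∈ (Ideal.span {y}).minimalPrimes := by
  have hyM : Ideal.span {y} ≤ M := (Ideal.span_singleton_le_iff_mem M).mpr (hmem M hM hM0)
  by_contra hMy
  obtain ⟨w, hwM, hw⟩ : ∃ w ∈ M, ∀ q ∈ (Ideal.span {y}).minimalPrimes, w ∉ q := by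
    have havoid := mt (Ideal.subset_union_prime_finite (f := id) (I := M)
      (Ideal.span {y}).finite_minimalPrimes_of_isNoetherianRing ⊥ ⊥
      fun q hq _ _ => hq.1.1).mp fun ⟨q, hq, hMq⟩ =>
        hMy (le_antisymm (hq.2 ⟨hM, hyM⟩ hMq) hMq ▸ hq)
    simpa [Set.not_subset] using havoid
  obtain ⟨Q, hQ, -⟩ := Ideal.exists_minimalPrimes_le ((Ideal.span_singleton_le_iff_mem M).mpr hwM)
  have hQprime : Q.IsPrime := hQ.1.1
  have hwQ : w ∈ Q := hQ.1.2 (Ideal.mem_span_singleton_self w)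
  have hQ0 : Q ≠ ⊥ := by
    rintro rfl
    obtain ⟨q, hq, -⟩ := Ideal.exists_minimalPrimes_le hyM
    exact hw q hq (Ideal.mem_bot.mp hwQ ▸ q.zero_mem)
  obtain ⟨q, hq, hqQ⟩ := Ideal.exists_minimalPrimes_le
    ((Ideal.span_singleton_le_iff_mem Q).mpr (hmem Q hQprime hQ0))
  have hqprime : q.IsPrime := hq.1.1
  have hq0 : ⊥ < q := bot_lt_iff_ne_bot.mpr <| by
    rintro rfl
    exact hy (hq.1.2 (Ideal.mem_span_singleton_self y))
  have hqQ' : q < Q := hqQ.lt_of_ne fun h => hw q hq (h ▸ hwQ)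
  have hheight : (1 : ℕ∞) + 1 ≤ 1 :=
    calc (1 : ℕ∞) + 1 ≤ (⊥ : Ideal T).height + 1 + 1 := by gcongr; exact le_add_self
      _ ≤ q.height + 1 := by gcongr; exact Ideal.height_add_one_le_of_lt_of_isPrime hq0
      _ ≤ Q.height := Ideal.height_add_one_le_of_lt_of_isPrime hqQ'
      _ ≤ 1 := Ideal.height_le_one_of_isPrincipal_of_mem_minimalPrimes _ Q hQ
  exact absurd hheight (by decide)

theorem dimensionLEOne_of_mem_forall_prime {T : Type*} [CommRing T] [IsDomain T]
    [IsNoetherianRing T] {y : T} (hy : y ≠ 0)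
    (hmem : ∀ q : Ideal T, q.IsPrime → q ≠ ⊥ → y ∈ q) : Ring.DimensionLEOne T := by
  refine ⟨fun {q} hq0 hq => ?_⟩
  obtain ⟨M, hM, hqM⟩ := Ideal.exists_le_maximal q hq.ne_top
  have hMmin := mem_minimalPrimes_span_singleton_of_mem_forall_prime hy hmem hM.isPrime
    (ne_bot_of_le_ne_bot hq0 hqM)
  have hqmin := mem_minimalPrimes_span_singleton_of_mem_forall_prime hy hmem hq hq0
  rwa [le_antisymm hqM (hMmin.2 hqmin.1 hqM)]

theorem jacobson_bot_le_radical_span_singleton {T : Type*} [CommRing T] [IsDomain T]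
    [IsNoetherianRing T] {y : T} (hy : y ≠ 0)
    (hmem : ∀ q : Ideal T, q.IsPrime → q ≠ ⊥ → y ∈ q) :
    (⊥ : Ideal T).jacobson ≤ (Ideal.span {y}).radical := by
  have := dimensionLEOne_of_mem_forall_prime hy hmem
  rw [Ideal.radical_eq_sInf]
  rintro x hx
  simp only [Submodule.mem_sInf, Set.mem_ofPred_eq]
  rintro q ⟨hyq, hq⟩
  have hq0 : q ≠ ⊥ := by
    rintro rfl
    exact hy (hyq (Ideal.mem_span_singleton_self y))
  exact Ideal.mem_sInf.mp hx ⟨bot_le, Ring.DimensionLEOne.maximalOfPrime hq0 hq⟩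

/-- The integral closure of an ideal `J`, described by the valuative criterion: `x` belongs to it
when its image in every valuation ring `V` under `S` lies in `JV`. The valuation rings range over
the universe of `S`, which contains those of the residue fields of `S`. -/
def valuativeClosure {S : Type u} [CommRing S] (J : Ideal S) : Ideal S where
  carrier := {x | ∀ (V : Type u) [CommRing V] [IsDomain V] [ValuationRing V] (φ : S →+* V),
    φ x ∈ J.map φ}
  add_mem' := fun hx hy V _ _ _ φ => by
    rw [map_add]
    exact add_mem (hx V φ) (hy V φ)
  zero_mem' := fun V _ _ _ φ => by
    rw [map_zero]
    exact zero_mem _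
  smul_mem' := fun c x hx V _ _ _ φ => by
    rw [smul_eq_mul, map_mul]
    exact Ideal.mul_mem_left _ _ (hx V φ)

namespace valuativeClosure

theorem self_le {S : Type u} [CommRing S] (J : Ideal S) : J ≤ valuativeClosure J :=
  fun _ hx _ _ _ _ φ => Ideal.mem_map_of_mem φ hx

theorem mono {S : Type u} [CommRing S] : Monotone (valuativeClosure (S := S)) :=
  fun _ _ h _ hx V _ _ _ φ => Ideal.map_mono h (hx V φ)

theorem map_le {S T : Type u} [CommRing S] [CommRing T] (φ : S →+* T)
    (J : Ideal S) : (valuativeClosure J).map φ ≤ valuativeClosure (J.map φ) :=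
  Ideal.map_le_iff_le_comap.mpr fun x hx V _ _ _ ψ => by
    rw [Ideal.map_map]
    exact hx V (ψ.comp φ)

end valuativeClosure

theorem eq_zero_of_mem_span_singleton_mul {V : Type*} [CommRing V] [IsDomain V] [IsLocalRing V]
    {y : V} (hy : y ∈ Ideal.span {y} * maximalIdeal V) : y = 0 := by
  obtain ⟨z, hz, hyz⟩ := Ideal.mem_span_singleton_mul.mp hy
  by_contra hy0
  have hz1 : z = 1 := mul_left_cancel₀ hy0 (by rw [hyz, mul_one])
  exact (Ideal.ne_top_iff_one _).mp (maximalIdeal.isMaximal V).ne_top (hz1 ▸ hz)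

theorem exists_valuationRing_le_comap_maximalIdeal {T : Type u} [CommRing T] [IsDomain T]
    (q : Ideal T) [q.IsPrime] :
    ∃ (V : Type u) (_ : CommRing V) (_ : IsDomain V) (_ : ValuationRing V) (φ : T →+* V),
      Function.Injective φ ∧ q ≤ (maximalIdeal V).comap φ := by
  let g : Localization.AtPrime q →+* FractionRing T :=
    IsLocalization.map (M := q.primeCompl) (T := nonZeroDivisors T) (FractionRing T) (RingHom.id T)
      q.primeCompl_le_nonZeroDivisors
  obtain ⟨V, hV, hlocal⟩ := IsLocalRing.exists_factor_valuationRing g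
  let ψ : Localization.AtPrime q →+* V := g.codRestrict V.toSubring hV
  let φ : T →+* V := ψ.comp (algebraMap T (Localization.AtPrime q))
  have hφ (x : T) : (φ x : FractionRing T) = algebraMap T (FractionRing T) x :=
    IsLocalization.map_eq q.primeCompl_le_nonZeroDivisors x
  refine ⟨V, inferInstance, inferInstance, inferInstance, φ, fun x y hxy => ?_, fun x hx => ?_⟩
  · apply IsFractionRing.injective T (FractionRing T)
    rw [← hφ, ← hφ, hxy]
  · have hψ : maximalIdeal _ ≤ (maximalIdeal V).comap ψ := ((local_hom_TFAE ψ).out 0 3).mp hlocal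
    exact hψ ((IsLocalization.AtPrime.to_map_mem_maximal_iff _ q x).mpr hx)

theorem exists_isPrime_maximal_notMem {S : Type*} [CommRing S] [IsNoetherianRing S] [IsReduced S]
    {x : S} (hx : x ≠ 0) :
    ∃ P : Ideal S, P.IsPrime ∧ x ∉ P ∧ ∀ q : Ideal S, q.IsPrime → P < q → x ∈ q := by
  obtain ⟨P₀, hP₀, hxP₀⟩ : ∃ P : Ideal S, P.IsPrime ∧ x ∉ P := by
    by_contra! h
    exact hx (nilpotent_iff_mem_prime.mpr h).eq_zero
  obtain ⟨P, ⟨hP, hxP⟩, hmax⟩ := WellFounded.has_min (wellFounded_gt (α := Ideal S))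
    {P | P.IsPrime ∧ x ∉ P} ⟨P₀, hP₀, hxP₀⟩
  exact ⟨P, hP, hxP, fun q hq hPq => by_contra fun hxq => hmax q ⟨hq, hxq⟩ hPq⟩

theorem map_jacobson_bot_le {R S : Type*} [CommRing R] [CommRing S] {f : R →+* S}
    (hf : Function.Surjective f) {I : Ideal R} (hI : I ≤ (⊥ : Ideal R).jacobson) :
    I.map f ≤ (⊥ : Ideal S).jacobson := by
  refine le_sInf fun M ⟨_, hM⟩ => Ideal.map_le_iff_le_comap.mpr (hI.trans ?_)
  exact sInf_le ⟨bot_le, Ideal.comap_isMaximal_of_surjective f hf⟩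

theorem iInf_valuativeClosure_pow_eq_bot {S : Type u} [CommRing S] [IsNoetherianRing S]
    [IsReduced S] {I : Ideal S} (hI : I ≤ (⊥ : Ideal S).jacobson) :
    ⨅ k, valuativeClosure (I ^ k) = ⊥ := by
  refine eq_bot_iff.mpr fun x hx => by_contra fun hx0 => ?_
  obtain ⟨P, hP, hxP, hmax⟩ := exists_isPrime_maximal_notMem hx0
  let π := Ideal.Quotient.mk P
  have hπ : Function.Surjective π := Ideal.Quotient.mk_surjective
  have hπx : π x ≠ 0 := mt Ideal.Quotient.eq_zero_iff_mem.mp hxP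
  have hIjac : I.map π ≤ (⊥ : Ideal (S ⧸ P)).jacobson := map_jacobson_bot_le hπ hI
  have hrad : I.map π ≤ (Ideal.span {π x}).radical :=
    hIjac.trans <| jacobson_bot_le_radical_span_singleton hπx fun q hq hq0 => by
      refine hmax (q.comap π) (hq.comap π) ?_
      exact P.mk_ker.symm.trans_lt ((Ideal.comap_mono bot_le).lt_of_ne fun h =>
        hq0 (Ideal.comap_injective_of_surjective π hπ h).symm)
  obtain ⟨j, hj⟩ := Ideal.exists_pow_le_of_le_radical_of_fg hrad (IsNoetherian.noetherian _)
  obtain ⟨M, hM⟩ := Ideal.exists_maximal (S ⧸ P)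
  obtain ⟨V, _, _, _, φ, hφ, hφM⟩ := exists_valuationRing_le_comap_maximalIdeal M
  have hIM : (I.map π).map φ ≤ maximalIdeal V :=
    Ideal.map_le_iff_le_comap.mpr (hIjac.trans (sInf_le ⟨bot_le, hM⟩) |>.trans hφM)
  have hmem : φ (π x) ∈ (I ^ (j + 1)).map (φ.comp π) := (Submodule.mem_iInf _).mp hx (j + 1) V _
  refine hπx ((map_eq_zero_iff φ hφ).mp (eq_zero_of_mem_span_singleton_mul ?_))
  rw [← Ideal.map_map, pow_succ, Ideal.map_mul, Ideal.map_mul, Ideal.map_pow] at hmem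
  have hle := Ideal.mul_mono (Ideal.map_mono (f := φ) hj) hIM
  rw [Ideal.map_span, Set.image_singleton] at hle
  exact hle hmem

/-! ### Chevalley's theorem -/

section Chevalley

variable {R M : Type*} [CommRing R] [AddCommGroup M] [Module R M]

theorem exists_le_iInf_sup {Q : ℕ → Submodule R M} (hQ : Antitone Q) (N : Submodule R M)
    [IsArtinian R (M ⧸ N)] : ∃ k, Q k ≤ ⨅ j, Q j ⊔ N := by
  obtain ⟨k, hk⟩ := IsArtinian.monotone_stabilizes
    (⟨fun j => OrderDual.toDual ((Q j).map N.mkQ), fun _ _ h => Submodule.map_mono (hQ h)⟩ :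
      ℕ →o (Submodule R (M ⧸ N))ᵒᵈ)
  refine ⟨k, le_iInf fun j => ?_⟩
  have hkj : (Q k).map N.mkQ ≤ (Q j).map N.mkQ := by
    obtain hjk | hkj := le_total j k
    · exact Submodule.map_mono (hQ hjk)
    · exact (OrderDual.toDual_inj.mp (hk j hkj)).le
  simpa [sup_comm] using Submodule.map_le_iff_le_comap.mp hkj

theorem exists_mem_iInf_sup_sub_mem {Q : ℕ → Submodule R M} (hQ : Antitone Q)
    (N N' : Submodule R M) [IsArtinian R (M ⧸ N')] {x : M} (hx : x ∈ ⨅ j, Q j ⊔ N) :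
    ∃ y ∈ ⨅ j, Q j ⊔ N', x - y ∈ N := by
  obtain ⟨k, hk⟩ := exists_le_iInf_sup hQ N'
  obtain ⟨y, hy, z, hz, rfl⟩ := Submodule.mem_sup.mp ((Submodule.mem_iInf _).mp hx k)
  exact ⟨y, hk hy, by simpa using hz⟩

/-- Elements of `⨅ j, Q j ⊔ I ^ i • ⊤` lift successively along `i`, and the limit of the lifts lies
in every `Q j`, so it is zero. -/
theorem iInf_sup_pow_smul_top_le (I : Ideal R) [IsPrecomplete I M]
    [∀ n : ℕ, IsArtinian R (M ⧸ (I ^ n • ⊤ : Submodule R M))] {Q : ℕ → Submodule R M}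
    (hQ : Antitone Q) (hIQ : ∀ n, I ^ n • ⊤ ≤ Q n) (hQ0 : ⨅ n, Q n = ⊥) (n : ℕ) :
    ⨅ j, Q j ⊔ I ^ n • ⊤ ≤ I ^ n • ⊤ := by
  intro x hx
  let P (i : ℕ) : Submodule R M := ⨅ j, Q j ⊔ I ^ (n + i) • ⊤
  have hlift (i : ℕ) (y : M) (hy : y ∈ P i) : ∃ z ∈ P (i + 1),
      y - z ∈ (I ^ (n + i) • ⊤ : Submodule R M) :=
    exists_mem_iInf_sup_sub_mem hQ _ _ hy
  choose! g hgP hg using hlift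
  let s : ℕ → M := fun i => Nat.rec x g i
  have hsP (i : ℕ) : s i ∈ P i := by
    induction i with
    | zero => exact hx
    | succ i ih => exact hgP i _ ih
  have hs (i : ℕ) : s i - s (i + 1) ∈ (I ^ (n + i) • ⊤ : Submodule R M) := hg i _ (hsP i)
  have hpow {a b : ℕ} (hab : a ≤ b) : (I ^ b • ⊤ : Submodule R M) ≤ I ^ a • ⊤ :=
    Submodule.smul_mono_left (Ideal.pow_le_pow_right hab)
  have hcauchy : AdicCompletion.IsAdicCauchy I M s := (AdicCompletion.isAdicCauchy_iff I M s).mpr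
    fun i => SModEq.sub_mem.mpr (hpow (Nat.le_add_left i n) (hs i))
  obtain ⟨L, hL⟩ := IsPrecomplete.prec inferInstance hcauchy
  have hsL (i : ℕ) : s i - L ∈ (I ^ i • ⊤ : Submodule R M) := SModEq.sub_mem.mp (hL i)
  have hLQ (j : ℕ) : L ∈ Q j := by
    have hsQ : s j ∈ Q j := sup_le le_rfl ((hpow (Nat.le_add_left j n)).trans (hIQ j))
      ((Submodule.mem_iInf _).mp (hsP j) j)
    simpa using sub_mem hsQ (hIQ j (hsL j))
  have hL0 : L = 0 := by simpa [hQ0] using (Submodule.mem_iInf Q).mpr hLQ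
  have hxs (i : ℕ) : x - s i ∈ (I ^ n • ⊤ : Submodule R M) := by
    induction i with
    | zero => simp [s]
    | succ i ih => simpa using add_mem ih (hpow (Nat.le_add_right n i) (hs i))
  simpa [hL0] using add_mem (hxs n) (hsL n)

theorem exists_le_pow_smul_top_of_iInf_eq_bot (I : Ideal R) [IsPrecomplete I M]
    [∀ n : ℕ, IsArtinian R (M ⧸ (I ^ n • ⊤ : Submodule R M))] {Q : ℕ → Submodule R M}
    (hQ : Antitone Q) (hIQ : ∀ n, I ^ n • ⊤ ≤ Q n) (hQ0 : ⨅ n, Q n = ⊥) (n : ℕ) :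
    ∃ k, Q k ≤ I ^ n • ⊤ :=
  (exists_le_iInf_sup hQ _).imp fun _ hk => hk.trans (iInf_sup_pow_smul_top_le I hQ hIQ hQ0 n)

end Chevalley

theorem isPrecomplete_of_finite {R M : Type*} [CommRing R] [AddCommGroup M] [Module R M]
    [Module.Finite R M] (I : Ideal R) [IsPrecomplete I R] : IsPrecomplete I M := by
  rw [← AdicCompletion.of_surjective_iff, ← LinearMap.range_eq_top, eq_top_iff]
  intro y _
  obtain ⟨z, rfl⟩ := AdicCompletion.ofTensorProduct_surjective_of_finite I M y
  induction z with
  | zero => simp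
  | add z₁ z₂ h₁ h₂ => simpa using add_mem (h₁ trivial) (h₂ trivial)
  | tmul a m =>
    obtain ⟨r, rfl⟩ := AdicCompletion.of_surjective I R a
    refine ⟨r • m, ?_⟩
    rw [AdicCompletion.ofTensorProduct_tmul, map_smul]
    exact (algebraMap_smul (AdicCompletion I R) r _).symm

theorem isArtinianRing_quotient_pow {S : Type*} [CommRing S] [IsNoetherianRing S] (I : Ideal S)
    [IsArtinianRing (S ⧸ I)] (n : ℕ) : IsArtinianRing (S ⧸ I ^ n) := by
  have hdim : Ring.KrullDimLE 0 (S ⧸ I ^ n) := .mk₀ fun p hp => by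
    let π := Ideal.Quotient.mk (I ^ n)
    have hπ : Function.Surjective π := Ideal.Quotient.mk_surjective
    have hker : RingHom.ker π ≤ p.comap π := Ideal.ker_le_comap π
    have hI : I ≤ p.comap π := Ideal.IsPrime.le_of_pow_le ((I ^ n).mk_ker.ge.trans hker)
    have : ((p.comap π).map (Ideal.Quotient.mk I)).IsMaximal :=
      have := Ideal.isPrime_map_quotientMk_of_isPrime hI
      Ideal.IsPrime.isMaximal' this
    have : (p.comap π).IsMaximal := by
      rw [← Ideal.comap_map_mk hI]
      exact Ideal.comap_isMaximal_of_surjective _ Ideal.Quotient.mk_surjective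
    rw [← Ideal.map_comap_of_surjective π hπ p]
    exact Ideal.IsMaximal.map_of_surjective_of_ker_le hπ hker
  exact IsNoetherianRing.isArtinianRing_of_krullDimLE_zero

theorem isArtinianRing_quotient_map {R : Type*} (S : Type*) [CommRing R] [CommRing S]
    [Algebra R S] [Module.Finite R S] (I : Ideal R) [IsArtinianRing (R ⧸ I)] :
    IsArtinianRing (S ⧸ I.map (algebraMap R S)) :=
  have : Module.Finite (R ⧸ I) (S ⧸ I.map (algebraMap R S)) := .of_restrictScalars_finite R _ _
  .of_finite (R ⧸ I) _

theorem exists_valuativeClosure_pow_le {S : Type u} [CommRing S] [IsNoetherianRing S]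
    [IsReduced S] (I : Ideal S) [IsAdicComplete I S] [IsArtinianRing (S ⧸ I)] (n : ℕ) :
    ∃ k, valuativeClosure (I ^ k) ≤ I ^ n := by
  have hart (n : ℕ) : IsArtinian S (S ⧸ (I ^ n • ⊤ : Ideal S)) := by
    rw [smul_eq_mul, Ideal.mul_top]
    let f : (S ⧸ I ^ n) →ₛₗ[Ideal.Quotient.mk (I ^ n)] (S ⧸ I ^ n) :=
      { toFun := id, map_add' := fun _ _ => rfl, map_smul' := fun _ _ => rfl }
    exact (LinearMap.isArtinian_iff_of_bijective f Function.bijective_id).mpr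
      (isArtinianRing_quotient_pow I n)
  simpa using exists_le_pow_smul_top_of_iInf_eq_bot I (Q := fun k => valuativeClosure (I ^ k))
    (fun _ _ h => valuativeClosure.mono (Ideal.pow_le_pow_right h))
    (fun k => by simpa using valuativeClosure.self_le (I ^ k))
    (iInf_valuativeClosure_pow_eq_bot (IsAdicComplete.le_jacobson_bot I)) n

/-! ### Content ideals in flat algebras -/

section Content

variable {D E : Type*} [CommRing D] [CommRing E] [Algebra D E]

theorem one_tmul_eq_zero_iff_mem_map (J : Ideal D) (b : E) :
    (1 : D ⧸ J) ⊗ₜ[D] b = 0 ↔ b ∈ J.map (algebraMap D E) := by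
  rw [← (TensorProduct.quotTensorEquivQuotSMul E J).map_eq_zero_iff,
    ← map_one (Ideal.Quotient.mk J), TensorProduct.quotTensorEquivQuotSMul_mk_tmul,
    one_smul, Submodule.Quotient.mk_eq_zero,
    Ideal.smul_top_eq_map, Submodule.restrictScalars_mem]

theorem mem_map_ker_of_tmul_eq_zero [Module.Flat D E] {W : Type*} [AddCommGroup W] [Module D W]
    {f : D →ₗ[D] W} {b : E} (h : f 1 ⊗ₜ[D] b = 0) :
    b ∈ Ideal.map (algebraMap D E) (LinearMap.ker f) := by
  let g : (D ⧸ LinearMap.ker f) →ₗ[D] W := (LinearMap.ker f).liftQ f le_rfl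
  have hg : Function.Injective g :=
    LinearMap.ker_eq_bot.mp (Submodule.ker_liftQ_eq_bot _ _ _ le_rfl)
  rw [← one_tmul_eq_zero_iff_mem_map]
  exact (map_eq_zero_iff _ (Module.Flat.rTensor_preserves_injective_linearMap (M := E) g hg)).mp h

theorem map_inf_of_flat [Module.Flat D E] (J₁ J₂ : Ideal D) :
    (J₁ ⊓ J₂).map (algebraMap D E) = J₁.map (algebraMap D E) ⊓ J₂.map (algebraMap D E) := by
  refine le_antisymm (Ideal.map_inf_le _) fun b ⟨h₁, h₂⟩ => ?_
  have hker : LinearMap.ker (J₁.mkQ.prod J₂.mkQ) = J₁ ⊓ J₂ := by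
    simp only [LinearMap.ker_prod, Submodule.ker_mkQ]
  rw [← hker]
  apply mem_map_ker_of_tmul_eq_zero
  apply (TensorProduct.prodLeft D D (D ⧸ J₁) (D ⧸ J₂) E).injective
  rw [LinearMap.prod_apply, map_zero]
  exact Prod.ext ((one_tmul_eq_zero_iff_mem_map J₁ b).mpr h₁)
    ((one_tmul_eq_zero_iff_mem_map J₂ b).mpr h₂)

theorem exists_isLeast_mem_map [Module.Flat D E] (J₀ : Ideal D) [IsArtinianRing (D ⧸ J₀)]
    (b : E) : ∃ c, IsLeast {J : Ideal D | J₀ ≤ J ∧ b ∈ J.map (algebraMap D E)} c := by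
  let π := Ideal.Quotient.mk J₀
  obtain ⟨c, hbc, hmin⟩ := exists_minimal_of_wellFoundedLT
    (fun J : Ideal (D ⧸ J₀) => b ∈ (J.comap π).map (algebraMap D E))
    ⟨⊤, by simp only [Ideal.comap_top, Ideal.map_top, Submodule.mem_top]⟩
  refine ⟨c.comap π, ⟨J₀.mk_ker.ge.trans (Ideal.ker_le_comap π), hbc⟩, fun J ⟨hJ₀, hbJ⟩ => ?_⟩
  have hJ : (J.map π).comap π = J := Ideal.comap_map_mk hJ₀
  rw [← hJ]
  refine Ideal.comap_mono (le_inf_iff.mp (hmin (y := c ⊓ J.map π) ?_ inf_le_left)).2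
  change b ∈ ((c ⊓ J.map π).comap π).map (algebraMap D E)
  rw [Ideal.comap_inf, hJ, map_inf_of_flat]
  exact ⟨hbc, hbJ⟩

variable {V : Type*} [CommRing V] [Algebra D V]

theorem one_tmul_mem_map_of_mem_map {J : Ideal D} {b : E} (hb : b ∈ J.map (algebraMap D E)) :
    (1 : V) ⊗ₜ[D] b ∈ (J.map (algebraMap D V)).map (algebraMap V (V ⊗[D] E)) := by
  have h := Ideal.mem_map_of_mem
    (Algebra.TensorProduct.includeRight : E →ₐ[D] V ⊗[D] E).toRingHom hb
  rwa [Ideal.map_map, AlgHom.toRingHom_eq_coe, AlgHom.comp_algebraMap,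
    IsScalarTower.algebraMap_eq D V (V ⊗[D] E), ← Ideal.map_map] at h

theorem nilradical_tensorProduct_le_map_ker {K : Type*} [CommRing K] [Algebra D K]
    [IsReduced (K ⊗[D] E)] {f : V →ₐ[D] K} (hf : Function.Surjective f) :
    nilradical (V ⊗[D] E) ≤ (RingHom.ker f).map (algebraMap V (V ⊗[D] E)) := by
  refine le_of_le_of_eq ?_ (Algebra.TensorProduct.rTensor_ker (C := E) f hf)
  exact fun b hb => ((mem_nilradical.mp hb).map _).eq_zero

theorem mem_map_comap_of_one_tmul_mem [Module.Flat D E] {Y : Ideal V} {b : E}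
    (h : (1 : V) ⊗ₜ[D] b ∈ Y.map (algebraMap V (V ⊗[D] E))) :
    b ∈ (Y.comap (algebraMap D V)).map (algebraMap D E) := by
  have hker : LinearMap.ker (Algebra.linearMap D (V ⧸ Y)) = Y.comap (algebraMap D V) := by
    ext d
    exact Ideal.Quotient.eq_zero_iff_mem
  have hY : RingHom.ker _ = Ideal.map (algebraMap V (V ⊗[D] E)) _ :=
    Algebra.TensorProduct.rTensor_ker (C := E) _ (Ideal.Quotient.mkₐ_surjective D Y)
  rw [show RingHom.ker (Ideal.Quotient.mkₐ D Y) = Y from Ideal.Quotient.mkₐ_ker D Y] at hY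
  rw [← hY, RingHom.mem_ker, Algebra.TensorProduct.map_tmul, map_one] at h
  rw [← hker]
  apply mem_map_ker_of_tmul_eq_zero
  rw [Algebra.linearMap_apply, map_one]
  exact h

end Content

theorem mem_map_span_singleton_mul_of_isNilpotent {V T : Type*} [CommRing V] [IsDomain V]
    [CommRing T] [Algebra V T] [Module.IsTorsionFree V T] {m : Ideal V}
    (hm : nilradical T ≤ m.map (algebraMap V T)) {y : V} (hy : y ≠ 0) {b : T}
    (hb : IsNilpotent b) (hby : b ∈ (Ideal.span {y}).map (algebraMap V T)) :
    b ∈ (Ideal.span {y} * m).map (algebraMap V T) := by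
  rw [Ideal.map_span, Set.image_singleton, Ideal.mem_span_singleton'] at hby
  obtain ⟨b', rfl⟩ := hby
  have hb' : IsNilpotent b' := by
    obtain ⟨n, hn⟩ := hb
    rw [mul_pow, ← map_pow, mul_comm, ← Algebra.smul_def] at hn
    exact ⟨n, (smul_eq_zero.mp hn).resolve_left (pow_ne_zero n hy)⟩
  have hyT := Ideal.mem_map_of_mem (algebraMap V T) (Ideal.mem_span_singleton_self y)
  rw [mul_comm b', Ideal.map_mul]
  exact Ideal.mul_mem_mul hyT (hm hb')

theorem le_span_singleton_mul_maximalIdeal {V : Type*} [CommRing V] [IsDomain V] [ValuationRing V]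
    {J : Ideal V} {y : V} (hy : y ∉ J) : J ≤ Ideal.span {y} * maximalIdeal V := by
  intro d hd
  obtain ⟨t, rfl⟩ | ⟨t, rfl⟩ := ValuationRing.dvd_total d y
  · exact absurd (J.mul_mem_right t hd) hy
  · refine Ideal.mul_mem_mul (Ideal.mem_span_singleton_self y) fun ht => hy ?_
    exact (J.mul_unit_mem_iff_mem ht).mp hd

/-- With `c` the least ideal containing `J` such that `b ∈ cE`, and `cV = yV` for a valuation ring
`V` with `y ∉ JV`, the reducedness of the closed fibre gives `1 ⊗ b ∈ y𝔪(V ⊗ E)`, whence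
`y ∈ cV ≤ y𝔪` by minimality of `c`. -/
theorem nilradical_le_map_valuativeClosure {D : Type u} {E : Type v} [CommRing D]
    [IsNoetherianRing D] [CommRing E] [Algebra D E] [Module.Flat D E]
    (J : Ideal D) [IsArtinianRing (D ⧸ J)]
    (hred : ∀ (V : Type u) [CommRing V] [IsDomain V] [ValuationRing V] [Algebra D V],
      J.map (algebraMap D V) ≤ maximalIdeal V → IsReduced (ResidueField V ⊗[D] E)) :
    nilradical E ≤ (valuativeClosure J).map (algebraMap D E) := by
  intro b hb
  obtain ⟨c, ⟨-, hbc⟩, hc⟩ := exists_isLeast_mem_map J b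
  refine Ideal.map_mono ?_ hbc
  intro x hx V _ _ _ φ
  let : Algebra D V := φ.toAlgebra
  obtain ⟨y, hy⟩ : ∃ y, c.map (algebraMap D V) = Ideal.span {y} :=
    (IsBezout.isPrincipal_of_FG _ (c.fg_of_isNoetherianRing.map _)).principal
  by_contra hxJ
  have hyJ : y ∉ J.map (algebraMap D V) := fun hyJ =>
    hxJ (((Ideal.span_singleton_le_iff_mem _).mpr hyJ) (hy ▸ Ideal.mem_map_of_mem _ hx))
  have hy0 : y ≠ 0 := by
    rintro rfl
    exact hyJ (zero_mem _)
  have hJy := le_span_singleton_mul_maximalIdeal hyJ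
  have hVred := hred V (hJy.trans Ideal.mul_le_right)
  have hnil : nilradical (V ⊗[D] E) ≤ (maximalIdeal V).map (algebraMap V (V ⊗[D] E)) := by
    have h := nilradical_tensorProduct_le_map_ker (E := E)
      (f := IsScalarTower.toAlgHom D V (ResidueField V)) residue_surjective
    rwa [show RingHom.ker (IsScalarTower.toAlgHom D V (ResidueField V)) = maximalIdeal V from
      ker_residue] at h
  have hby : (1 : V) ⊗ₜ[D] b ∈ (Ideal.span {y}).map (algebraMap V (V ⊗[D] E)) :=
    hy ▸ one_tmul_mem_map_of_mem_map hbc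
  have hbm := mem_map_span_singleton_mul_of_isNilpotent hnil hy0
    ((mem_nilradical.mp hb).map (Algebra.TensorProduct.includeRight : E →ₐ[D] V ⊗[D] E)) hby
  have hcy : c.map (algebraMap D V) ≤ Ideal.span {y} * maximalIdeal V :=
    Ideal.map_le_iff_le_comap.mpr <|
      hc ⟨Ideal.map_le_iff_le_comap.mp hJy, mem_map_comap_of_one_tmul_mem hbm⟩
  exact hy0 (eq_zero_of_mem_span_singleton_mul (hcy (hy ▸ Ideal.mem_span_singleton_self y)))

/-! ### Adic completions -/

theorem exists_algHom_adicCompletion_surjective {P R : Type*} [CommRing P] [CommRing R]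
    [Algebra P R] {J : Ideal P} (hJ : J.FG) [IsAdicComplete (J.map (algebraMap P R)) R]
    (h : ∀ x : R, ∃ p : P, x - algebraMap P R p ∈ J.map (algebraMap P R)) :
    ∃ f : AdicCompletion J P →ₐ[P] R, Function.Surjective f := by
  have hJn (n : ℕ) : J ^ n ≤ (J.map (algebraMap P R) ^ n).comap (algebraMap P R) := by
    rw [← Ideal.map_le_iff_le_comap, Ideal.map_pow]
  let f := IsAdicComplete.liftAlgHom (J.map (algebraMap P R))
    (fun n => (Ideal.quotientMapₐ _ (Algebra.ofId P R) (hJn n)).comp (AdicCompletion.evalₐ J n))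
    fun {m n} hmn => AlgHom.ext fun x => by
      obtain ⟨a, rfl⟩ := AdicCompletion.mk_surjective J P x
      have ha : algebraMap P R (a n) - algebraMap P R (a m) ∈ J.map (algebraMap P R) ^ m := by
        rw [← map_sub]
        refine hJn m ?_
        have := SModEq.sub_mem.mp (a.property hmn).symm
        rwa [smul_eq_mul, Ideal.mul_top] at this
      simp only [AlgHom.comp_apply, AdicCompletion.evalₐ_mk]
      exact Ideal.Quotient.eq.mpr ha
  have := AdicCompletion.isAdicComplete_self J hJ
  have hf : (J.map (algebraMap P (AdicCompletion J P))).map (f : AdicCompletion J P →+* R) =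
      J.map (algebraMap P R) := by
    rw [Ideal.map_map, AlgHom.comp_algebraMap]
  have : IsHausdorff ((J.map (algebraMap P (AdicCompletion J P))).map
      (f : AdicCompletion J P →+* R)) R := by
    rw [hf]
    infer_instance
  refine ⟨f, surjective_of_mk_map_comp_surjective (I := J.map (algebraMap P (AdicCompletion J P)))
    (f : AdicCompletion J P →+* R) fun x => ?_⟩
  obtain ⟨x, rfl⟩ := Ideal.Quotient.mk_surjective x
  obtain ⟨p, hp⟩ := h x
  refine ⟨algebraMap P _ p, Eq.symm ?_⟩
  rw [RingHom.comp_apply, AlgHom.coe_toRingHom, AlgHom.commutes, Ideal.Quotient.eq, hf]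
  exact hp

theorem isNoetherianRing_of_isAdicComplete_map {A R : Type*} [CommRing A] [IsNoetherianRing A]
    [CommRing R] [Algebra A R] (m : Ideal A) [IsAdicComplete (m.map (algebraMap A R)) R]
    (h : ∀ x : R, ∃ a : A, x - algebraMap A R a ∈ m.map (algebraMap A R)) :
    IsNoetherianRing R := by
  obtain ⟨n, s, hs⟩ := Submodule.fg_iff_exists_fin_generating_family.mp m.fg_of_isNoetherianRing
  let : Algebra (MvPolynomial (Fin n) A) R :=
    (MvPolynomial.aeval (algebraMap A R ∘ s)).toAlgebra
  have hm : (MvPolynomial.idealOfVars (Fin n) A).map (algebraMap (MvPolynomial (Fin n) A) R) =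
      m.map (algebraMap A R) := by
    rw [← hs, MvPolynomial.idealOfVars, Ideal.map_span, ← Ideal.span, Ideal.map_span,
      ← Set.range_comp, ← Set.range_comp]
    congr 2
    ext i
    exact MvPolynomial.aeval_X _ i
  have : IsAdicComplete ((MvPolynomial.idealOfVars (Fin n) A).map
      (algebraMap (MvPolynomial (Fin n) A) R)) R := by
    rwa [hm]
  obtain ⟨f, hf⟩ := exists_algHom_adicCompletion_surjective (R := R)
    (MvPolynomial.idealOfVars_fg (Fin n) A) fun x => by
      obtain ⟨a, ha⟩ := h x
      refine ⟨MvPolynomial.C a, ?_⟩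
      rw [hm]
      convert ha
      exact MvPolynomial.aeval_C _ a
  have : IsNoetherianRing
      (AdicCompletion (MvPolynomial.idealOfVars (Fin n) A) (MvPolynomial (Fin n) A)) :=
    isNoetherianRing_of_ringEquiv (MvPowerSeries (Fin n) A)
      (MvPowerSeries.toAdicCompletionAlgEquiv (Fin n) A).toRingEquiv
  exact isNoetherianRing_of_surjective _ R f.toRingHom hf

theorem isNoetherianRing_adicCompletion {A : Type*} [CommRing A] [IsNoetherianRing A]
    (I : Ideal A) : IsNoetherianRing (AdicCompletion I A) := by
  have hI := I.fg_of_isNoetherianRing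
  have := AdicCompletion.isAdicComplete_self I hI
  refine isNoetherianRing_of_isAdicComplete_map I fun x => ?_
  obtain ⟨a, ha⟩ := Ideal.Quotient.mk_surjective (AdicCompletion.evalOneₐ I x)
  refine ⟨a, ?_⟩
  rw [← AdicCompletion.ker_evalOneₐ_eq_map I hI, AlgHom.toRingHom_eq_coe, RingHom.mem_ker,
    AlgHom.coe_toRingHom, map_sub, AlgHom.commutes, ← ha]
  exact sub_self _

theorem isArtinianRing_quotient_map_adicCompletion {A : Type*} [CommRing A] [IsNoetherianRing A]
    (m : Ideal A) [IsArtinianRing (A ⧸ m)] :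
    IsArtinianRing (AdicCompletion m A ⧸ m.map (algebraMap A (AdicCompletion m A))) := by
  rw [← AdicCompletion.ker_evalOneₐ_eq_map m m.fg_of_isNoetherianRing]
  exact (RingHom.quotientKerEquivOfSurjective
    (AdicCompletion.evalOneₐ_surjective m)).symm.surjective.isArtinianRing

theorem isAdicComplete_map_of_finite {R : Type*} (S : Type*) [CommRing R] [IsNoetherianRing R]
    [CommRing S] [Algebra R S] [Module.Finite R S] (I : Ideal R) [IsAdicComplete I R] :
    IsAdicComplete (I.map (algebraMap R S)) S := by
  have := IsHausdorff.of_le_jacobson I S (IsAdicComplete.le_jacobson_bot I)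
  have := isPrecomplete_of_finite (M := S) I
  exact (IsAdicComplete.map_algebraMap_iff I S).mpr {}

theorem mem_map_pow_of_one_tmul_mem {A C : Type*} [CommRing A] [CommRing C] [Algebra A C]
    {m : Ideal A} {n : ℕ} {x : C}
    (hx : (1 : AdicCompletion m A) ⊗ₜ[A] x ∈
      (m ^ n).map (algebraMap A (AdicCompletion m A ⊗[A] C))) :
    x ∈ (m ^ n).map (algebraMap A C) := by
  let J := (m ^ n).map (algebraMap A C)
  have hJ (a : A) (ha : a ∈ m ^ n) : algebraMap A (C ⧸ J) a = 0 :=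
    Ideal.Quotient.eq_zero_iff_mem.mpr (Ideal.mem_map_of_mem _ ha)
  let g : AdicCompletion m A ⊗[A] C →ₐ[A] C ⧸ J := Algebra.TensorProduct.productMap
    ((Ideal.Quotient.liftₐ (m ^ n) (Algebra.ofId A (C ⧸ J)) hJ).comp (AdicCompletion.evalₐ m n))
    (Ideal.Quotient.mkₐ A J)
  have hg : (m ^ n).map (algebraMap A (AdicCompletion m A ⊗[A] C)) ≤ RingHom.ker g :=
    Ideal.map_le_iff_le_comap.mpr fun a ha => (g.commutes a).trans (hJ a ha)
  have hgx := hg hx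
  rw [RingHom.mem_ker, Algebra.TensorProduct.productMap_apply_tmul, map_one, one_mul] at hgx
  exact Ideal.Quotient.eq_zero_iff_mem.mp hgx

theorem exists_valuativeClosure_map_pow_le {A D : Type u} [CommRing A] [IsNoetherianRing A]
    (m : Ideal A) [IsArtinianRing (A ⧸ m)] [CommRing D] [Algebra A D] [Module.Finite A D]
    [IsReduced (AdicCompletion m A ⊗[A] D)] (n : ℕ) :
    ∃ k, valuativeClosure (m.map (algebraMap A D) ^ k) ≤ m.map (algebraMap A D) ^ n := by
  let R := AdicCompletion m A
  let S := R ⊗[A] D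
  have : IsNoetherianRing R := isNoetherianRing_adicCompletion m
  have : IsNoetherianRing S := .of_finite R S
  have := AdicCompletion.isAdicComplete_self m m.fg_of_isNoetherianRing
  have := isArtinianRing_quotient_map_adicCompletion m
  have hcomplete := isAdicComplete_map_of_finite S (m.map (algebraMap A R))
  have hartinian := isArtinianRing_quotient_map S (m.map (algebraMap A R))
  rw [Ideal.map_map, ← IsScalarTower.algebraMap_eq] at hcomplete hartinian
  obtain ⟨k, hk⟩ := exists_valuativeClosure_pow_le (m.map (algebraMap A S)) n
  let ι : D →ₐ[A] S := Algebra.TensorProduct.includeRight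
  have hι : (m.map (algebraMap A D)).map (ι : D →+* S) = m.map (algebraMap A S) := by
    rw [Ideal.map_map, AlgHom.comp_algebraMap]
  refine ⟨k, fun x hx => ?_⟩
  have hxS := valuativeClosure.map_le (ι : D →+* S) _ (Ideal.mem_map_of_mem _ hx)
  rw [Ideal.map_pow, hι] at hxS
  rw [← Ideal.map_pow]
  apply mem_map_pow_of_one_tmul_mem
  rw [Ideal.map_pow]
  exact hk hxS

theorem eq_zero_of_forall_mem_map_pow {A B D : Type*} [CommRing A] [CommRing B]
    [IsNoetherianRing B] [CommRing D] [Algebra A B] [Algebra A D] [Module.Finite A D] {m : Ideal A}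
    (hm : m.map (algebraMap A B) ≤ (⊥ : Ideal B).jacobson) {x : D ⊗[A] B}
    (hx : ∀ n, x ∈ (m.map (algebraMap A (D ⊗[A] B))) ^ n) : x = 0 := by
  have := IsHausdorff.map_algebraMap_iff.mp (IsHausdorff.of_le_jacobson _ (B ⊗[A] D) hm)
  let e := Algebra.TensorProduct.comm A D B
  refine e.injective (Eq.trans (IsHausdorff.haus ‹IsHausdorff m (B ⊗[A] D)› _ fun n => ?_)
    (map_zero e).symm)
  have hex := Ideal.mem_map_of_mem (e : D ⊗[A] B →+* B ⊗[A] D) (hx n)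
  rw [Ideal.map_pow, Ideal.map_map, show (e : D ⊗[A] B →+* B ⊗[A] D).comp (algebraMap A _) =
    algebraMap A _ from e.toAlgHom.comp_algebraMap] at hex
  rw [SModEq.zero, Ideal.smul_top_eq_map, Submodule.restrictScalars_mem, Ideal.map_pow]
  exact hex

/-! ### Geometrically reduced algebras -/

theorem isReduced_tensorProduct_comm (R : Type*) {S T : Type*} [CommRing R] [CommRing S]
    [CommRing T] [Algebra R S] [Algebra R T] [IsReduced (S ⊗[R] T)] : IsReduced (T ⊗[R] S) :=
  isReduced_of_injective (Algebra.TensorProduct.comm R T S)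
    (Algebra.TensorProduct.comm R T S).injective

theorem isReduced_tensorProduct_cancelBaseChange_iff {A K L C : Type*} [CommRing A] [CommRing K]
    [Algebra A K] [CommRing L] [Algebra A L] [Algebra K L] [IsScalarTower A K L] [CommRing C]
    [Algebra A C] : IsReduced (L ⊗[K] (K ⊗[A] C)) ↔ IsReduced (L ⊗[A] C) :=
  let e := Algebra.TensorProduct.cancelBaseChange A K K L C
  ⟨fun _ => isReduced_of_injective e.symm e.symm.injective,
    fun _ => isReduced_of_injective e e.injective⟩

theorem eq_zero_of_forall_algHom_eq_zero {k D : Type*} [Field k] [IsAlgClosed k] [CommRing D]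
    [IsReduced D] [Algebra k D] [Algebra.FiniteType k D] {d : D}
    (hd : ∀ ε : D →ₐ[k] k, ε d = 0) : d = 0 := by
  have : IsJacobsonRing D := isJacobsonRing_of_finiteType (A := k)
  rw [← Ideal.mem_bot, ← IsJacobsonRing.out ‹_› (Ideal.isRadical_bot_iff.mpr ‹IsReduced D›),
    Ideal.jacobson, Ideal.mem_sInf]
  rintro M ⟨-, hM⟩
  let := Ideal.Quotient.field M
  have : Module.Finite k (D ⧸ M) := finite_of_finite_type_of_isJacobsonRing k (D ⧸ M)
  let f : (D ⧸ M) ≃ₐ[k] k := (AlgEquiv.ofBijective (Algebra.ofId k (D ⧸ M))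
    IsAlgClosed.algebraMap_bijective_of_isIntegral).symm
  rw [← Ideal.Quotient.eq_zero_iff_mem]
  exact f.injective ((hd (f.toAlgHom.comp (Ideal.Quotient.mkₐ k M))).trans (map_zero f).symm)

theorem repr_lid_map_eq {k D R ι : Type*} [CommRing k] [CommRing D] [Algebra k D] [CommRing R]
    [Algebra k R] (e : Module.Basis ι k R) (ε : D →ₐ[k] k) (x : D ⊗[k] R) (i : ι) :
    e.repr (Algebra.TensorProduct.lid k R (Algebra.TensorProduct.map ε (AlgHom.id k R) x)) i =
      ε ((Algebra.TensorProduct.basis D e).repr x i) := by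
  induction x with
  | zero => simp
  | add x y hx hy => simp only [map_add, Finsupp.add_apply, hx, hy]
  | tmul d r => simp

theorem isReduced_tensorProduct_of_finiteType {k R D : Type*} [Field k] [IsAlgClosed k]
    [CommRing R] [Algebra k R] [IsReduced R] [CommRing D] [IsReduced D] [Algebra k D]
    [Algebra.FiniteType k D] : IsReduced (D ⊗[k] R) := by
  refine ⟨fun x hx => ?_⟩
  let e := Module.Basis.ofVectorSpace k R
  refine (Algebra.TensorProduct.basis D e).ext_elem fun i => ?_
  rw [map_zero, Finsupp.zero_apply]
  refine eq_zero_of_forall_algHom_eq_zero (k := k) fun ε => ?_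
  have hεx := (hx.map (Algebra.TensorProduct.map ε (AlgHom.id k R))).map
    (Algebra.TensorProduct.lid k R)
  rw [← repr_lid_map_eq, hεx.eq_zero, map_zero, Finsupp.zero_apply]

theorem isReduced_tensorProduct_of_isAlgClosed (k : Type*) {R S : Type*} [Field k]
    [IsAlgClosed k] [CommRing R] [Algebra k R] [IsReduced R] [CommRing S] [Algebra k S]
    [IsReduced S] : IsReduced (R ⊗[k] S) := by
  refine IsReduced.tensorProduct_of_flat_of_forall_fg fun D hD => ?_
  have : Algebra.FiniteType k D := D.fg_iff_finiteType.mp hD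
  have : IsReduced D := isReduced_of_injective D.val Subtype.val_injective
  have := isReduced_tensorProduct_of_finiteType (k := k) (R := R) (D := D)
  exact isReduced_tensorProduct_comm k

theorem GeometricallyReduced.isGeometricallyReduced {F : Type u} {R : Type v} [Field F]
    [CommRing R] [Algebra F R] (h : GeometricallyReduced F R) :
    Algebra.IsGeometricallyReduced F R := by
  rw [Algebra.isGeometricallyReduced_field_iff]
  suffices IsReduced (R ⊗[F] AlgebraicClosure F) from isReduced_tensorProduct_comm F
  refine IsReduced.tensorProduct_of_flat_of_forall_fg fun D hD => ?_
  have : Algebra.IsIntegral F D := .of_injective D.val Subtype.val_injective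
  have : Algebra.FiniteType F D := D.fg_iff_finiteType.mp hD
  have : Module.Finite F D := Algebra.IsIntegral.finite
  let : Field D := (Algebra.IsIntegral.isField_iff_isField
    (algebraMap F D).injective).mp (Field.toIsField F) |>.toField
  have := h D
  exact isReduced_tensorProduct_comm F

theorem isReduced_tensorProduct_of_isGeometricallyReduced (F : Type*) {R : Type*} [Field F]
    [CommRing R] [Algebra F R] [Algebra.IsGeometricallyReduced F R] (K : Type*) [Field K]
    [Algebra F K] : IsReduced (K ⊗[F] R) := by
  let F' := AlgebraicClosure F
  let K' := AlgebraicClosure K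
  let : Algebra F' K' := (IsAlgClosed.lift : F' →ₐ[F] K').toRingHom.toAlgebra
  have : IsScalarTower F F' K' :=
    .of_algebraMap_eq fun x => ((IsAlgClosed.lift : F' →ₐ[F] K').commutes x).symm
  have : IsReduced (F' ⊗[F] R) := (Algebra.isGeometricallyReduced_field_iff F R).mp ‹_›
  have : IsReduced (K' ⊗[F'] (F' ⊗[F] R)) := isReduced_tensorProduct_of_isAlgClosed F'
  have : IsReduced (K' ⊗[F] R) := isReduced_tensorProduct_cancelBaseChange_iff.mp this
  exact isReduced_of_injective
    (Algebra.TensorProduct.map (IsScalarTower.toAlgHom F K K') (AlgHom.id F R))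
    (Module.Flat.rTensor_preserves_injective_linearMap (M := R)
      (IsScalarTower.toAlgHom F K K').toLinearMap (algebraMap K K').injective)

theorem isReduced_residueField_tensorProduct {A B D V : Type*} [CommRing A] [IsLocalRing A]
    [CommRing B] [Algebra A B]
    [Algebra.IsGeometricallyReduced (ResidueField A) (ResidueField A ⊗[A] B)] [CommRing D]
    [Algebra A D] [CommRing V] [IsLocalRing V] [Algebra D V]
    (hV : ((maximalIdeal A).map (algebraMap A D)).map (algebraMap D V) ≤ maximalIdeal V) :
    IsReduced (ResidueField V ⊗[D] (D ⊗[A] B)) := by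
  let : Algebra A V := ((algebraMap D V).comp (algebraMap A D)).toAlgebra
  have : IsScalarTower A D V := .of_algebraMap_eq fun _ => rfl
  have : IsScalarTower A D (ResidueField V) := .of_algebraMap_eq fun _ => rfl
  rw [Ideal.map_map] at hV
  have : IsLocalHom (algebraMap A V) := ((IsLocalRing.local_hom_TFAE _).out 0 2).mpr hV
  rw [isReduced_tensorProduct_cancelBaseChange_iff,
    ← isReduced_tensorProduct_cancelBaseChange_iff (K := ResidueField A)]
  exact isReduced_tensorProduct_of_isGeometricallyReduced (ResidueField A) (ResidueField V)

/-! ### Fibres of flat algebras -/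

theorem isReduced_tensorProduct_of_finite {A D : Type u} {B : Type v} [CommRing A]
    [IsNoetherianRing A] [IsLocalRing A] [CommRing B] [IsNoetherianRing B] [Algebra A B]
    [Module.Flat A B] (hB : (maximalIdeal A).map (algebraMap A B) ≤ (⊥ : Ideal B).jacobson)
    [Algebra.IsGeometricallyReduced (ResidueField A) (ResidueField A ⊗[A] B)]
    [CommRing D] [Algebra A D] [Module.Finite A D]
    [IsReduced (AdicCompletion (maximalIdeal A) A ⊗[A] D)] : IsReduced (D ⊗[A] B) := by
  have : IsNoetherianRing D := .of_finite A D
  let I := (maximalIdeal A).map (algebraMap A D)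
  have : IsArtinianRing (A ⧸ maximalIdeal A) := inferInstanceAs (IsArtinianRing (ResidueField A))
  have : IsArtinianRing (D ⧸ I) := isArtinianRing_quotient_map D (maximalIdeal A)
  have hnil (k : ℕ) : nilradical (D ⊗[A] B) ≤
      (valuativeClosure (I ^ k)).map (algebraMap D (D ⊗[A] B)) := by
    have := isArtinianRing_quotient_pow I k
    refine nilradical_le_map_valuativeClosure (I ^ k) fun V _ _ _ _ hV => ?_
    rw [Ideal.map_pow] at hV
    exact isReduced_residueField_tensorProduct (Ideal.IsPrime.le_of_pow_le hV)
  refine ⟨fun x hx => eq_zero_of_forall_mem_map_pow hB fun n => ?_⟩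
  obtain ⟨k, hk⟩ := exists_valuativeClosure_map_pow_le (D := D) (maximalIdeal A) n
  have hxn := Ideal.map_mono hk (hnil k hx)
  rwa [Ideal.map_pow, Ideal.map_map, ← IsScalarTower.algebraMap_eq] at hxn

theorem exists_algebraMap_ne_zero_isIntegral_smul {A L : Type*} [CommRing A] (p : Ideal A)
    [p.IsPrime] [Field L] [Algebra p.ResidueField L] [Algebra.IsAlgebraic p.ResidueField L]
    [Algebra A L] [IsScalarTower A p.ResidueField L] (l : L) :
    ∃ s : A, algebraMap A L s ≠ 0 ∧ IsIntegral A (s • l) := by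
  let : Algebra (A ⧸ p) L := ((algebraMap p.ResidueField L).comp
    (algebraMap (A ⧸ p) p.ResidueField)).toAlgebra
  have : IsScalarTower (A ⧸ p) p.ResidueField L := .of_algebraMap_eq fun _ => rfl
  have : IsScalarTower A (A ⧸ p) L := .of_algebraMap_eq fun a => by
    rw [IsScalarTower.algebraMap_apply A p.ResidueField L,
      IsScalarTower.algebraMap_apply A (A ⧸ p) p.ResidueField]
    rfl
  have : FaithfulSMul (A ⧸ p) L := .trans (A ⧸ p) p.ResidueField L
  have : Algebra.IsAlgebraic (A ⧸ p) L :=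
    (IsFractionRing.comap_isAlgebraic_iff (K := p.ResidueField)).mpr inferInstance
  obtain ⟨y, hy0, hy⟩ := (Algebra.IsAlgebraic.isAlgebraic (R := A ⧸ p) l).exists_integral_multiple
  obtain ⟨s, rfl⟩ := Ideal.Quotient.mk_surjective y
  refine ⟨s, ?_, isIntegral_trans (A := A ⧸ p) _ ?_⟩
  · rw [IsScalarTower.algebraMap_apply A (A ⧸ p) L]
    exact (FaithfulSMul.algebraMap_eq_zero_iff (A ⧸ p) L).not.mpr hy0
  · rwa [← algebraMap_smul (A ⧸ p) s l]

theorem isReduced_of_forall_exists_smul_mem_range {A P Q : Type*} [CommRing A] [CommRing P]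
    [CommRing Q] [Algebra A P] [Algebra A Q] [IsReduced P] (f : P →ₐ[A] Q)
    (hf : Function.Injective f)
    (h : ∀ x : Q, ∃ s : A, IsUnit (algebraMap A Q s) ∧ s • x ∈ f.range) : IsReduced Q := by
  refine ⟨fun x hx => ?_⟩
  obtain ⟨s, hs, y, hy⟩ := h x
  have hy : f y = algebraMap A Q s * x := hy.trans (Algebra.smul_def s x)
  have hfy : IsNilpotent (f y) := hy ▸ (Commute.all _ _).isNilpotent_mul_left hx
  have hy0 : y = 0 := ((IsNilpotent.map_iff hf).mp hfy).eq_zero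
  rwa [hy0, map_zero, eq_comm, hs.mul_right_eq_zero] at hy

section IntegralClosure

variable {A L : Type*} (B : Type*) [CommRing A] [CommRing B] [Algebra A B] [Field L] [Algebra A L]

theorem exists_smul_mem_range_of_forall_isIntegral_smul
    (hL : ∀ l : L, ∃ s : A, algebraMap A L s ≠ 0 ∧ IsIntegral A (s • l)) (x : B ⊗[A] L) :
    ∃ s : A, IsUnit (algebraMap A (B ⊗[A] L) s) ∧
      s • x ∈ (Algebra.TensorProduct.map (AlgHom.id A B) (integralClosure A L).val).range := by
  suffices ∃ s : A, algebraMap A L s ≠ 0 ∧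
      s • x ∈ (Algebra.TensorProduct.map (AlgHom.id A B) (integralClosure A L).val).range by
    obtain ⟨s, hs, hsx⟩ := this
    have hu := hs.isUnit.map (Algebra.TensorProduct.includeRight : L →ₐ[A] B ⊗[A] L)
    rw [AlgHom.commutes] at hu
    exact ⟨s, hu, hsx⟩
  induction x with
  | zero => exact ⟨1, by simp, by rw [smul_zero]; exact zero_mem _⟩
  | tmul b l =>
    obtain ⟨s, hs, hsl⟩ := hL l
    exact ⟨s, hs, b ⊗ₜ ⟨s • l, hsl⟩, by simp⟩
  | add x y hx hy =>
    obtain ⟨s, hs, hx⟩ := hx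
    obtain ⟨t, ht, hy⟩ := hy
    refine ⟨s * t, by rw [map_mul]; exact mul_ne_zero hs ht, ?_⟩
    rw [smul_add]
    refine add_mem ?_ ?_
    · rw [mul_comm, mul_smul]
      exact Subalgebra.smul_mem _ hx t
    · rw [mul_smul]
      exact Subalgebra.smul_mem _ hy s

theorem isReduced_tensorProduct_of_forall_finite [Module.Flat A B]
    (hL : ∀ l : L, ∃ s : A, algebraMap A L s ≠ 0 ∧ IsIntegral A (s • l))
    (h : ∀ D : Subalgebra A L, Module.Finite A D → IsReduced (B ⊗[A] D)) :
    IsReduced (B ⊗[A] L) := by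
  have : IsReduced (B ⊗[A] integralClosure A L) := by
    refine IsReduced.tensorProduct_of_flat_of_forall_fg fun D hD => ?_
    have : Algebra.FiniteType A D := D.fg_iff_finiteType.mp hD
    have : Algebra.IsIntegral A D := .of_injective D.val Subtype.val_injective
    have : Module.Finite A D := Algebra.IsIntegral.finite
    let e := D.equivMapOfInjective (integralClosure A L).val Subtype.val_injective
    have := h _ (Module.Finite.equiv e.toLinearEquiv)
    let e' := Algebra.TensorProduct.congr (AlgEquiv.refl : B ≃ₐ[A] B) e
    exact isReduced_of_injective e' e'.injective
  exact isReduced_of_forall_exists_smul_mem_range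
    (Algebra.TensorProduct.map (AlgHom.id A B) (integralClosure A L).val)
    (Module.Flat.lTensor_preserves_injective_linearMap (M := B)
      (integralClosure A L).val.toLinearMap Subtype.val_injective)
    (exists_smul_mem_range_of_forall_isIntegral_smul B hL)

end IntegralClosure

theorem geometricallyReduced_fibers_of_closed_fiber_general {A : Type u} {B : Type v} [CommRing A]
    [CommRing B] [IsNoetherianRing A] [IsNoetherianRing B] [IsLocalRing A] [Algebra A B]
    [Module.Flat A B] (hB : (maximalIdeal A).map (algebraMap A B) ≤ (⊥ : Ideal B).jacobson)
    (hfib : GeometricallyReduced (ResidueField A) (ResidueField A ⊗[A] B))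
    (p : Ideal A) [p.IsPrime]
    (hformal : GeometricallyReduced p.ResidueField
      (p.ResidueField ⊗[A] AdicCompletion (maximalIdeal A) A)) :
    GeometricallyReduced p.ResidueField (p.ResidueField ⊗[A] B) := by
  intro L _ _ _
  let : Algebra A L := ((algebraMap p.ResidueField L).comp (algebraMap A p.ResidueField)).toAlgebra
  have : IsScalarTower A p.ResidueField L := .of_algebraMap_eq fun _ => rfl
  let R := AdicCompletion (maximalIdeal A) A
  have : IsReduced (L ⊗[A] R) := isReduced_tensorProduct_cancelBaseChange_iff.mp (hformal L)
  have : IsReduced (R ⊗[A] L) := isReduced_tensorProduct_comm A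
  have := hfib.isGeometricallyReduced
  rw [isReduced_tensorProduct_cancelBaseChange_iff]
  suffices IsReduced (B ⊗[A] L) from isReduced_tensorProduct_comm A
  refine isReduced_tensorProduct_of_forall_finite B
    (exists_algebraMap_ne_zero_isIntegral_smul p) fun D _ => ?_
  have : IsReduced (R ⊗[A] D) := isReduced_of_injective
    (Algebra.TensorProduct.map (AlgHom.id A R) D.val)
    (Module.Flat.lTensor_preserves_injective_linearMap (M := R) D.val.toLinearMap
      Subtype.val_injective)
  have : IsReduced (D ⊗[A] B) := isReduced_tensorProduct_of_finite hB
  exact isReduced_tensorProduct_comm A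

/-- **Statement 12 (localization theorem, reduced case).** Let `σ : A → B` be a flat
local homomorphism of Noetherian local commutative rings, `m` the maximal ideal of `A`.
If the formal fibers of `A` are geometrically reduced (for every prime `p` of `A`, the
fiber `κ(p) ⊗[A] Â` of `A → Â` is geometrically reduced over `κ(p)`), and the closed
fiber `B ⧸ mB = κ(m) ⊗[A] B` is geometrically reduced over `A ⧸ m`, then `σ` is reduced:
for every prime `p` of `A`, the fiber `κ(p) ⊗[A] B` is geometrically reduced over
`κ(p)`. -/
theorem geometricallyReduced_fibers_of_closed_fiber
    (A B : Type*) [CommRing A] [CommRing B] [IsNoetherianRing A] [IsNoetherianRing B]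
    [IsLocalRing A] [IsLocalRing B]
    [Algebra A B] [IsLocalHom (algebraMap A B)] [Module.Flat A B]
    (hformal : ∀ (p : Ideal A) (hp : p.IsPrime),
      haveI : p.IsPrime := hp
      GeometricallyReduced (ResidueField (Localization.AtPrime p))
        (ResidueField (Localization.AtPrime p) ⊗[A] AdicCompletion (maximalIdeal A) A))
    (hfib : GeometricallyReduced (ResidueField A) (ResidueField A ⊗[A] B)) :
    ∀ (p : Ideal A) (hp : p.IsPrime),
      haveI : p.IsPrime := hp
      GeometricallyReduced (ResidueField (Localization.AtPrime p))
        (ResidueField (Localization.AtPrime p) ⊗[A] B) := fun p hp =>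
  geometricallyReduced_fibers_of_closed_fiber_general
    (le_trans (((local_hom_TFAE (algebraMap A B)).out 0 2).mp ‹_›) (maximalIdeal_le_jacobson ⊥))
    hfib p (hformal p hp)
end

section
/- Let k be a field of characteristic p > 0 that is not perfect, let a ∈ k be an element that is not a p-th power in k, and let K = k[X]/(X^p − a). Let A = K[[Y_1,…,Y_m]] and B = K[[Y_1,…,Y_n]] be formal power series rings over K (m, n ≥ 0). Then the completed tensor product A⊗̂_k B is a Noetherian ring that is not reduced. -/
open TensorProduct

set_option synthInstance.maxHeartbeats 1000000
set_option maxHeartbeats 2000000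

/-!
Let `m` and `n` be the Jacobson radicals of `A` and `B`. The ideal `r` is the kernel of the
surjection `A ⊗ B → A ⧸ m ⊗ B ⧸ n`. If `A ⧸ m` and `B ⧸ n` are of finite type over `k` and `r` is
finitely generated, then lifting generators of `C ⧸ r` and of `r` to the completion exhibits it as
a quotient of a power series ring over a polynomial ring over `k`.

If `x ∈ A` and `y ∈ B` are `p`-th roots of the same `a ∈ k`, then `(x ⊗ 1 - 1 ⊗ y) ^ p = 0`. When
`a` is not a `p`-th power in `k`, the class of `x` in `A ⧸ m` does not lie in `k`: otherwise
`x - b ∈ m` for some `b ∈ k`, although `(x - b) ^ p = a - b ^ p` is a unit. Hence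
`x ⊗ 1 - 1 ⊗ y` has a nonzero image in `A ⧸ m ⊗ B ⧸ n`, so it remains a nonzero nilpotent in the
completion. For power series over `K = k[X] ⧸ (X ^ p - a)`, take both roots to be the class of `X`.
-/

section AdicallyComplete

variable {R S : Type*} [CommRing R] [CommRing S]

theorem exists_ringHom_mvPowerSeries_of_isAdicComplete {σ : Type*} [Finite σ] (I : Ideal R)
    [IsAdicComplete I R] (g : S →+* R) {x : σ → R} (hx : ∀ i, x i ∈ I) :
    ∃ F : MvPowerSeries σ S →+* R,
      (∀ s, F (MvPowerSeries.C s) = g s) ∧ ∀ i, F (MvPowerSeries.X i) = x i := by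
  let : WithIdeal R := ⟨I⟩
  let : UniformSpace S := ⊥
  have : DiscreteTopology S := ⟨rfl⟩
  have : IsUniformAddGroup S := inferInstance
  obtain ⟨_, _⟩ := (IsAdic.isAdicComplete_iff (R := R) (I := I) rfl).mp inferInstance
  have hg : Continuous g := continuous_of_discreteTopology
  have hxeval : MvPowerSeries.HasEval x :=
    ⟨fun i ↦ WithIdeal.isTopologicallyNilpotent_of_mem (hx i), by simp⟩
  refine ⟨MvPowerSeries.eval₂Hom hg hxeval, fun s ↦ ?_, fun i ↦ ?_⟩ <;>
    simp [MvPowerSeries.coe_eval₂Hom]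

theorem isNoetherianRing_of_isAdicComplete_of_surjective [IsNoetherianRing S] {I : Ideal R}
    [IsAdicComplete I R] (hI : I.FG) {g : S →+* R}
    (hg : Function.Surjective ((Ideal.Quotient.mk I).comp g)) : IsNoetherianRing R := by
  obtain ⟨n, x, rfl⟩ := Submodule.fg_iff_exists_fin_generating_family.mp hI
  obtain ⟨F, hFC, hFX⟩ := exists_ringHom_mvPowerSeries_of_isAdicComplete
    (Ideal.span (Set.range x)) g fun i ↦ Ideal.subset_span (Set.mem_range_self i)
  have hF : (Ideal.span (Set.range MvPowerSeries.X)).map F = Ideal.span (Set.range x) := by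
    rw [Ideal.map_span, ← Set.range_comp, Function.comp_def, funext hFX]
  have : IsHausdorff ((Ideal.span (Set.range MvPowerSeries.X)).map F) R := by
    rw [hF]
    infer_instance
  refine isNoetherianRing_of_surjective _ _ F
    (surjective_of_mk_map_comp_surjective (I := Ideal.span (Set.range MvPowerSeries.X)) F ?_)
  rw [hF]
  intro y
  obtain ⟨s, rfl⟩ := hg y
  exact ⟨MvPowerSeries.C s, congrArg (Ideal.Quotient.mk _) (hFC s)⟩

theorem mem_pow_of_isNilpotent_of_isReduced_adicCompletion {I : Ideal R}
    [IsReduced (AdicCompletion I R)] {r : R} (hr : IsNilpotent r) (n : ℕ) : r ∈ I ^ n := by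
  have h : algebraMap R (AdicCompletion I R) r = 0 := (hr.map _).eq_zero
  rw [← Ideal.Quotient.eq_zero_iff_mem]
  simpa using congrArg (AdicCompletion.evalₐ I n) h

variable (S) [Algebra S R]

theorem isNoetherianRing_of_isAdicComplete [IsNoetherianRing S] {I : Ideal R}
    [IsAdicComplete I R] (hI : I.FG) [Algebra.FiniteType S (R ⧸ I)] : IsNoetherianRing R := by
  obtain ⟨n, f, hf⟩ := Algebra.FiniteType.iff_quotient_mvPolynomial''.mp
    ‹Algebra.FiniteType S (R ⧸ I)›
  choose x hx using fun i ↦ Ideal.Quotient.mk_surjective (f (MvPolynomial.X i))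
  have hfx : (Ideal.Quotient.mkₐ S I).comp (MvPolynomial.aeval x) = f :=
    MvPolynomial.algHom_ext fun i ↦ by simp [hx]
  refine isNoetherianRing_of_isAdicComplete_of_surjective hI
    (g := (MvPolynomial.aeval (R := S) x).toRingHom) ?_
  rwa [← hfx] at hf

theorem isNoetherianRing_adicCompletion_s15 [IsNoetherianRing S] {I : Ideal R} (hI : I.FG)
    [Algebra.FiniteType S (R ⧸ I)] : IsNoetherianRing (AdicCompletion I R) := by
  have := AdicCompletion.isAdicComplete_self I hI
  let e : (AdicCompletion I R ⧸ I.map (algebraMap R (AdicCompletion I R))) ≃ₐ[R] R ⧸ I :=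
    (Ideal.quotientEquivAlgOfEq R (AdicCompletion.ker_evalOneₐ_eq_map I hI).symm).trans
      (Ideal.quotientKerAlgEquivOfSurjective (AdicCompletion.evalOneₐ_surjective I))
  have : Algebra.FiniteType S
      (AdicCompletion I R ⧸ I.map (algebraMap R (AdicCompletion I R))) :=
    .equiv inferInstance (e.restrictScalars S).symm
  exact isNoetherianRing_of_isAdicComplete S (hI.map (algebraMap R _))

end AdicallyComplete

section Residue

variable (k A B : Type*) [Field k] [CommRing A] [CommRing B] [Algebra k A] [Algebra k B]

/-- The quotient map `A ⊗ B → A ⧸ m ⊗ B ⧸ n`, where `m` and `n` are the Jacobson radicals of `A`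
and `B`; its kernel is `tensorRadical k A B`. -/
noncomputable def tensorResidue :
    A ⊗[k] B →ₐ[k] (A ⧸ (⊥ : Ideal A).jacobson) ⊗[k] (B ⧸ (⊥ : Ideal B).jacobson) :=
  Algebra.TensorProduct.map (Ideal.Quotient.mkₐ k _) (Ideal.Quotient.mkₐ k _)

theorem tensorResidue_surjective : Function.Surjective (tensorResidue k A B) :=
  Algebra.TensorProduct.map_surjective _ _ (Ideal.Quotient.mkₐ_surjective k _)
    (Ideal.Quotient.mkₐ_surjective k _)

theorem ker_tensorResidue : RingHom.ker (tensorResidue k A B) = tensorRadical k A B := by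
  have hA : RingHom.ker (Ideal.Quotient.mkₐ k (⊥ : Ideal A).jacobson) = (⊥ : Ideal A).jacobson :=
    Ideal.mk_ker
  have hB : RingHom.ker (Ideal.Quotient.mkₐ k (⊥ : Ideal B).jacobson) = (⊥ : Ideal B).jacobson :=
    Ideal.mk_ker
  rw [tensorResidue, Algebra.TensorProduct.map_ker _ _ (Ideal.Quotient.mkₐ_surjective k _)
    (Ideal.Quotient.mkₐ_surjective k _), hA, hB, tensorRadical]

variable {k A B}

theorem isNoetherianRing_completedTensor (hA : (⊥ : Ideal A).jacobson.FG)
    (hB : (⊥ : Ideal B).jacobson.FG) [Algebra.FiniteType k (A ⧸ (⊥ : Ideal A).jacobson)]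
    [Algebra.FiniteType k (B ⧸ (⊥ : Ideal B).jacobson)] :
    IsNoetherianRing (CompletedTensor k A B) := by
  have : Algebra.FiniteType k
      ((A ⧸ (⊥ : Ideal A).jacobson) ⊗[k] (B ⧸ (⊥ : Ideal B).jacobson)) :=
    .trans (S := A ⧸ (⊥ : Ideal A).jacobson) inferInstance inferInstance
  have : Algebra.FiniteType k (A ⊗[k] B ⧸ tensorRadical k A B) := by
    rw [← ker_tensorResidue]
    exact .equiv inferInstance
      (Ideal.quotientKerAlgEquivOfSurjective (tensorResidue_surjective k A B)).symm
  exact isNoetherianRing_adicCompletion_s15 k (Submodule.FG.sup (hA.map _) (hB.map _))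

end Residue

section PthRoots

variable {k A B : Type*} [Field k] [CommRing A] [CommRing B] [Algebra k A] [Algebra k B]

theorem tmul_one_sub_one_tmul_ne_zero [Nontrivial B] {x : A}
    (hx : x ∉ (⊥ : Subalgebra k A)) (y : B) : x ⊗ₜ[k] (1 : B) - (1 : A) ⊗ₜ[k] y ≠ 0 := by
  intro h
  rw [← Subalgebra.mem_toSubmodule, Algebra.toSubmodule_bot] at hx
  obtain ⟨f, hfx, hf⟩ := Submodule.exists_le_ker_of_notMem hx
  have hf1 : f 1 = 0 := hf (Submodule.one_le.mp le_rfl)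
  have : f x • (1 : B) = 0 := by
    simpa [hf1] using congrArg (fun t ↦ TensorProduct.lid k B (f.rTensor B t)) h
  exact hfx ((smul_eq_zero.mp this).resolve_right one_ne_zero)

variable {p : ℕ} [ExpChar k p] {a : k} [Nontrivial A]

theorem isNilpotent_tmul_one_sub_one_tmul [Nontrivial B] {x : A} {y : B}
    (hx : x ^ p = algebraMap k A a) (hy : y ^ p = algebraMap k B a) :
    IsNilpotent (x ⊗ₜ[k] (1 : B) - (1 : A) ⊗ₜ[k] y) := by
  have : ExpChar (A ⊗[k] B) p :=
    expChar_of_injective_algebraMap (algebraMap k (A ⊗[k] B)).injective p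
  refine ⟨p, ?_⟩
  rw [sub_pow_expChar, Algebra.TensorProduct.tmul_pow, Algebra.TensorProduct.tmul_pow, hx, hy,
    one_pow, one_pow, Algebra.TensorProduct.tmul_one_eq_one_tmul, sub_self]

theorem mk_jacobson_bot_notMem_bot_of_pow_eq (ha : ∀ b : k, b ^ p ≠ a) {x : A}
    (hx : x ^ p = algebraMap k A a) :
    Ideal.Quotient.mk (⊥ : Ideal A).jacobson x ∉
      (⊥ : Subalgebra k (A ⧸ (⊥ : Ideal A).jacobson)) := by
  rintro ⟨b, hb⟩
  have : ExpChar A p := expChar_of_injective_algebraMap (algebraMap k A).injective p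
  have hmem : x - algebraMap k A b ∈ (⊥ : Ideal A).jacobson := Ideal.Quotient.eq.mp hb.symm
  have hpow : (x - algebraMap k A b) ^ p = algebraMap k A (a - b ^ p) := by
    rw [sub_pow_expChar, hx, map_sub, map_pow]
  have hunit : IsUnit ((x - algebraMap k A b) ^ p) :=
    hpow ▸ (sub_ne_zero.mpr (ha b).symm).isUnit.map (algebraMap k A)
  have htop : (⊥ : Ideal A).jacobson = ⊤ :=
    Ideal.eq_top_of_isUnit_mem _ hmem ((isUnit_pow_iff (expChar_pos k p).ne').mp hunit)
  exact bot_ne_top (Ideal.jacobson_eq_top_iff.mp htop)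

theorem not_isReduced_completedTensor [Nontrivial B] (ha : ∀ b : k, b ^ p ≠ a) {x : A} {y : B}
    (hx : x ^ p = algebraMap k A a) (hy : y ^ p = algebraMap k B a) :
    ¬ IsReduced (CompletedTensor k A B) := by
  intro _
  have : Nontrivial (B ⧸ (⊥ : Ideal B).jacobson) :=
    Ideal.Quotient.nontrivial_iff.mpr (mt Ideal.jacobson_eq_top_iff.mp bot_ne_top)
  have hmem : x ⊗ₜ[k] (1 : B) - (1 : A) ⊗ₜ[k] y ∈ tensorRadical k A B := by
    simpa using mem_pow_of_isNilpotent_of_isReduced_adicCompletion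
      (isNilpotent_tmul_one_sub_one_tmul hx hy) 1
  rw [← ker_tensorResidue, RingHom.mem_ker] at hmem
  apply tmul_one_sub_one_tmul_ne_zero (mk_jacobson_bot_notMem_bot_of_pow_eq ha hx)
    (Ideal.Quotient.mk (⊥ : Ideal B).jacobson y)
  simpa [tensorResidue] using hmem

end PthRoots

section PowerSeries

variable {R : Type*} [CommRing R]

theorem mem_jacobson_bot_of_constantCoeff_eq_zero {σ : Type*} {f : MvPowerSeries σ R}
    (hf : MvPowerSeries.constantCoeff f = 0) : f ∈ (⊥ : Ideal (MvPowerSeries σ R)).jacobson :=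
  Ideal.mem_jacobson_bot.mpr fun g ↦ MvPowerSeries.isUnit_iff_constantCoeff.mpr (by simp [hf])

instance finiteType_mvPowerSeries_quotient_jacobson_bot (k σ : Type*) [CommRing k] [Algebra k R]
    [Algebra.FiniteType k R] :
    Algebra.FiniteType k (MvPowerSeries σ R ⧸ (⊥ : Ideal (MvPowerSeries σ R)).jacobson) := by
  refine .of_surjective ((Ideal.Quotient.mkₐ k _).comp
    (IsScalarTower.toAlgHom k R (MvPowerSeries σ R))) fun y ↦ ?_
  obtain ⟨f, rfl⟩ := Ideal.Quotient.mk_surjective y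
  refine ⟨MvPowerSeries.constantCoeff f, Ideal.Quotient.eq.mpr ?_⟩
  exact mem_jacobson_bot_of_constantCoeff_eq_zero (by simp [MvPowerSeries.algebraMap_apply])

theorem exists_pow_eq_algebraMap_mvPowerSeries_adjoinRoot (σ : Type*) (p : ℕ) (a : R) :
    ∃ x : MvPowerSeries σ (AdjoinRoot (Polynomial.X ^ p - Polynomial.C a)),
      x ^ p = algebraMap R _ a := by
  refine ⟨MvPowerSeries.C (AdjoinRoot.root _), ?_⟩
  have h : AdjoinRoot.root (Polynomial.X ^ p - Polynomial.C a) ^ p = AdjoinRoot.of _ a := by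
    rw [← AdjoinRoot.mk_X, ← map_pow, ← AdjoinRoot.mk_C]
    exact AdjoinRoot.mk_eq_mk.mpr dvd_rfl
  rw [← map_pow, h, MvPowerSeries.algebraMap_apply, AdjoinRoot.algebraMap_eq]

end PowerSeries

theorem not_isReduced_completedTensor_powerSeries_general {k A B : Type*} [Field k] [CommRing A]
    [CommRing B] [Algebra k A] [Algebra k B] [Nontrivial A] [Nontrivial B]
    (hA : (⊥ : Ideal A).jacobson.FG) (hB : (⊥ : Ideal B).jacobson.FG)
    [Algebra.FiniteType k (A ⧸ (⊥ : Ideal A).jacobson)]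
    [Algebra.FiniteType k (B ⧸ (⊥ : Ideal B).jacobson)] {p : ℕ} [ExpChar k p] {a : k}
    (ha : ∀ b : k, b ^ p ≠ a) {x : A} {y : B} (hx : x ^ p = algebraMap k A a)
    (hy : y ^ p = algebraMap k B a) :
    IsNoetherianRing (CompletedTensor k A B) ∧ ¬ IsReduced (CompletedTensor k A B) :=
  ⟨isNoetherianRing_completedTensor hA hB, not_isReduced_completedTensor ha hx hy⟩

/-- **Statement 16.** Let `k` be a field of characteristic `p > 0` that is not perfect,
`a ∈ k` an element that is not a `p`-th power, and `K = k[X] ⧸ (X^p - a)`. Let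
`A = K[[Y_1, …, Y_m]]` and `B = K[[Y_1, …, Y_n]]`. Then `A ⊗̂[k] B` is Noetherian but
not reduced. -/
theorem not_isReduced_completedTensor_powerSeries (k : Type*) [Field k] (p : ℕ)
    [CharP k p] (hp : p ≠ 0) (a : k) (ha : ∀ b : k, b ^ p ≠ a) (m n : ℕ) :
    IsNoetherianRing
        (CompletedTensor k
          (MvPowerSeries (Fin m) (AdjoinRoot (Polynomial.X ^ p - Polynomial.C a)))
          (MvPowerSeries (Fin n) (AdjoinRoot (Polynomial.X ^ p - Polynomial.C a)))) ∧
      ¬ IsReduced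
        (CompletedTensor k
          (MvPowerSeries (Fin m) (AdjoinRoot (Polynomial.X ^ p - Polynomial.C a)))
          (MvPowerSeries (Fin n) (AdjoinRoot (Polynomial.X ^ p - Polynomial.C a)))) := by
  have : ExpChar k p := .prime ((CharP.char_is_prime_or_zero k p).resolve_right hp)
  have : Nontrivial (AdjoinRoot (Polynomial.X ^ p - Polynomial.C a)) :=
    AdjoinRoot.nontrivial _ (by simpa [Polynomial.degree_X_pow_sub_C (Nat.pos_of_ne_zero hp)])
  obtain ⟨x, hx⟩ := exists_pow_eq_algebraMap_mvPowerSeries_adjoinRoot (Fin m) p a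
  obtain ⟨y, hy⟩ := exists_pow_eq_algebraMap_mvPowerSeries_adjoinRoot (Fin n) p a
  exact not_isReduced_completedTensor_powerSeries_general
    (IsNoetherian.noetherian _) (IsNoetherian.noetherian _) ha hx hy
end
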